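/- Let A satisfy (H1), β_1,...,β_n > -2, and let u = (u_1,...,u_n) be a (not necessarily radial) solution of the singular Liouville system with energy σ. Set m_i = Σ_{j=1}^n a_{ij} σ_j. Then m_i > 2 + β_i for every i ∈ I, and there exist constants c_1,...,c_n ∈ ℝ and δ > 0 such that for |x| > 1: u_i(x) = -m_i log|x| + c_i + O(|x|^{-δ}) and ∇u_i(x) = -m_i x/|x|² + O(|x|^{-δ-1}) for every i ∈ I. -/

import Mathlib

open Set MeasureTheory

/-- Hypothesis (H1): symmetric, nonnegative entries, irreducible, invertible. -/
def H1 {n : ℕ} (A : Matrix (Fin n) (Fin n) ℝ) : Prop :=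
  A.IsSymm ∧ (∀ i j, 0 ≤ A i j) ∧
  (∀ S : Finset (Fin n), S.Nonempty → S ≠ Finset.univ → ∃ i ∈ S, ∃ j ∈ Sᶜ, A i j ≠ 0) ∧
  IsUnit A.det

/-- The Euclidean norm on ℝ². -/
noncomputable def nrm (x : ℝ × ℝ) : ℝ := Real.sqrt (x.1 ^ 2 + x.2 ^ 2)

/-- The Laplacian on ℝ²: sum of the two second partial derivatives. -/
noncomputable def lap (u : ℝ × ℝ → ℝ) (x : ℝ × ℝ) : ℝ :=
  deriv (deriv (fun s => u (s, x.2))) x.1 + deriv (deriv (fun t => u (x.1, t))) x.2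

/-- Solution (not necessarily radial) of the singular Liouville system on ℝ²
with the finite-energy condition. -/
def PDESolution {n : ℕ} (A : Matrix (Fin n) (Fin n) ℝ) (β : Fin n → ℝ)
    (u : Fin n → ℝ × ℝ → ℝ) : Prop :=
  (∀ i, Continuous (u i)) ∧
  (∀ i, ∀ x : ℝ × ℝ, x ≠ 0 → ContDiffAt ℝ 2 (u i) x) ∧
  (∀ i, ∀ x : ℝ × ℝ, x ≠ 0 →
      lap (u i) x + ∑ j, A i j * nrm x ^ β j * Real.exp (u j x) = 0) ∧
  (∀ i, Integrable (fun x : ℝ × ℝ => nrm x ^ β i * Real.exp (u i x)))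

/-- Energy of a solution: σ_i = (1/(2π)) ∫_{ℝ²} |x|^{β_i} e^{u_i(x)} dx. -/
noncomputable def energyPDE {n : ℕ} (β : Fin n → ℝ) (u : Fin n → ℝ × ℝ → ℝ) (i : Fin n) : ℝ :=
  (1 / (2 * Real.pi)) * ∫ x : ℝ × ℝ, nrm x ^ β i * Real.exp (u i x)

/-!
In log-polar coordinates `x = exp (t + iθ)`, the functions `W i = u i + (β i + 2) t` solve the
Liouville system `ΔW i = -∑ j, a i j * exp (W j)` on a cylinder, without weights. Integrating over
the circles `t = const`, the slope of the mean of `W i` is the slope at `t = +∞` plus a tail of the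
source; the continuity of `u i` at `0` makes it start from `β i + 2` at `t = -∞`, so it ends at
`β i + 2 - m i`. Were this limit nonnegative, the mean would not decrease and, by Jensen, the energy
would be infinite; this is the inequality `m i > 2 + β i`.

For the expansion, the energy far out is small, which bounds `exp (W i)` there: otherwise rescale
around a point where a weighted maximum is attained, and the mean value inequality gives a definite
amount of energy to a small disc. The oscillation of `W i` over circles then decays as fast as its
Laplacian: compare the odd part of `W i` under a reflection in `θ` with
`(K exp (-δ t) + ε exp (t / 2)) cos (2θ / 3)`. First with `δ = 0`, this shows that `W i` stays
close to its mean, so that `exp (W i)` decays exponentially; then with `δ > 0`, that `W i` is an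
affine function of `t` up to `O(exp (-δ t))`. The gradient is controlled by the same reflection
trick, on a square.
-/

open Filter Topology Real Asymptotics

/-! ### The Laplacian on the plane -/

section Laplacian

variable {G H : ℝ × ℝ → ℝ}

theorem deriv_deriv_comp_curve {γ γ' : ℝ → ℝ × ℝ} {t : ℝ} {γ'' : ℝ × ℝ}
    (hG : ContDiffAt ℝ 2 G (γ t)) (hγ : ∀ s, HasDerivAt γ (γ' s) s)
    (hγ' : HasDerivAt γ' γ'' t) :
    deriv (deriv fun s => G (γ s)) t
      = fderiv ℝ (fderiv ℝ G) (γ t) (γ' t) (γ' t) + fderiv ℝ G (γ t) γ'' := by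
  have hnear : ∀ᶠ s in 𝓝 t, ContDiffAt ℝ 2 G (γ s) :=
    (hγ t).continuousAt.eventually (hG.eventually (by simp))
  have hfirst : deriv (fun s => G (γ s)) =ᶠ[𝓝 t] fun s => fderiv ℝ G (γ s) (γ' s) := by
    filter_upwards [hnear] with s hs
    exact ((hs.differentiableAt (by norm_num)).hasFDerivAt.comp_hasDerivAt s (hγ s)).deriv
  have hfderiv : DifferentiableAt ℝ (fderiv ℝ G) (γ t) :=
    (hG.fderiv_right (m := 1) (by norm_num)).differentiableAt (by norm_num)
  rw [hfirst.deriv_eq]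
  exact ((hfderiv.hasFDerivAt.comp_hasDerivAt t (hγ t)).clm_apply hγ').deriv

theorem lap_eq_fderiv_fderiv {z : ℝ × ℝ} (hG : ContDiffAt ℝ 2 G z) :
    lap G z = fderiv ℝ (fderiv ℝ G) z (1, 0) (1, 0) + fderiv ℝ (fderiv ℝ G) z (0, 1) (0, 1) := by
  have h₁ := deriv_deriv_comp_curve (γ := fun s => (s, z.2)) (γ' := fun _ => (1, 0)) (t := z.1) hG
    (fun s => (hasDerivAt_id s).prodMk (hasDerivAt_const s z.2)) (hasDerivAt_const _ _)
  have h₂ := deriv_deriv_comp_curve (γ := fun s => (z.1, s)) (γ' := fun _ => (0, 1)) (t := z.2) hG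
    (fun s => (hasDerivAt_const s z.1).prodMk (hasDerivAt_id s)) (hasDerivAt_const _ _)
  rw [lap, h₁, h₂, map_zero, add_zero, add_zero]

theorem continuous_lap (hH : ContDiff ℝ 2 H) : Continuous (lap H) := by
  have : Continuous (fderiv ℝ (fderiv ℝ H)) :=
    (hH.fderiv_right (m := 1) (by norm_num)).continuous_fderiv (by norm_num)
  rw [show lap H = _ from funext fun z => lap_eq_fderiv_fderiv hH.contDiffAt]
  fun_prop

theorem lap_sub {z : ℝ × ℝ} (hG : ContDiffAt ℝ 2 G z) (hH : ContDiffAt ℝ 2 H z) :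
    lap (fun z => G z - H z) z = lap G z - lap H z := by
  have hfirst : fderiv ℝ (fun z => G z - H z) =ᶠ[𝓝 z] fun w => fderiv ℝ G w - fderiv ℝ H w := by
    filter_upwards [hG.eventually (by simp), hH.eventually (by simp)] with w hGw hHw
    exact fderiv_fun_sub (hGw.differentiableAt (by norm_num)) (hHw.differentiableAt (by norm_num))
  have hG' := (hG.fderiv_right (m := 1) (by norm_num)).differentiableAt (by norm_num)
  have hH' := (hH.fderiv_right (m := 1) (by norm_num)).differentiableAt (by norm_num)
  rw [lap_eq_fderiv_fderiv (hG.sub hH), lap_eq_fderiv_fderiv hG, lap_eq_fderiv_fderiv hH,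
    hfirst.fderiv_eq, fderiv_fun_sub hG' hH']
  simp only [sub_apply]
  ring

theorem lap_neg (H : ℝ × ℝ → ℝ) (z : ℝ × ℝ) : lap (fun z => -H z) z = -lap H z := by
  simp only [lap, deriv.fun_neg', deriv.fun_neg]
  ring

theorem lap_swap (H : ℝ × ℝ → ℝ) (z : ℝ × ℝ) : lap (fun z => H z.swap) z = lap H z.swap :=
  add_comm _ _

theorem lap_reflect (H : ℝ × ℝ → ℝ) (c : ℝ) (z : ℝ × ℝ) :
    lap (fun z => H (z.1, c - z.2)) z = lap H (z.1, c - z.2) := by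
  have h (f : ℝ → ℝ) : deriv (deriv fun t => f (c - t)) z.2 = deriv (deriv f) (c - z.2) := by
    rw [show deriv (fun t => f (c - t)) = fun t => -deriv f (c - t) from
      funext fun t => deriv_comp_const_sub _ _ _, deriv.fun_neg, deriv_comp_const_sub, neg_neg]
  exact congrArg _ (h fun t => H (z.1, t))

theorem lap_mul_fst_snd (f g : ℝ → ℝ) (z : ℝ × ℝ) :
    lap (fun z => f z.1 * g z.2) z
      = deriv (deriv f) z.1 * g z.2 + f z.1 * deriv (deriv g) z.2 := by
  simp only [lap, deriv_mul_const_field', deriv_const_mul_field']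

theorem lap_add_fst_snd (f g : ℝ → ℝ) (z : ℝ × ℝ) :
    lap (fun z => f z.1 + g z.2) z = deriv (deriv f) z.1 + deriv (deriv g) z.2 := by
  simp only [lap, deriv_add_const', deriv_const_add']

theorem deriv_fst_eq_fderiv {z : ℝ × ℝ} (hH : DifferentiableAt ℝ H z) :
    deriv (fun s => H (s, z.2)) z.1 = fderiv ℝ H z (1, 0) :=
  (hH.hasFDerivAt.comp_hasDerivAt z.1
    ((hasDerivAt_id z.1).prodMk (hasDerivAt_const z.1 z.2))).deriv

theorem deriv_snd_eq_fderiv {z : ℝ × ℝ} (hH : DifferentiableAt ℝ H z) :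
    deriv (fun s => H (z.1, s)) z.2 = fderiv ℝ H z (0, 1) :=
  (hH.hasFDerivAt.comp_hasDerivAt z.2
    ((hasDerivAt_const z.2 z.1).prodMk (hasDerivAt_id z.2))).deriv

end Laplacian

/-! ### The comparison principle -/

theorem deriv_deriv_nonpos_of_isLocalMax {g : ℝ → ℝ} {a : ℝ} (hg : ContinuousAt g a)
    (hmax : IsLocalMax g a) : deriv (deriv g) a ≤ 0 := by
  by_contra! hpos
  have hmin : IsLocalMin g a := isLocalMin_of_deriv_deriv_pos hpos hmax.deriv_eq_zero hg
  have hconst : g =ᶠ[𝓝 a] fun _ => g a := by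
    filter_upwards [hmax, hmin] with x h₁ h₂ using le_antisymm h₁ h₂
  have hzero : deriv (deriv g) a = 0 := by
    rw [hconst.deriv.deriv_eq]
    simp
  exact hpos.ne' hzero

theorem lap_nonpos_of_isLocalMax {H : ℝ × ℝ → ℝ} {z : ℝ × ℝ} (hH : ContinuousAt H z)
    (hmax : IsLocalMax H z) : lap H z ≤ 0 := by
  have h₁ : ContinuousAt (fun s : ℝ => (s, z.2)) z.1 := by fun_prop
  have h₂ : ContinuousAt (fun s : ℝ => (z.1, s)) z.2 := by fun_prop
  exact add_nonpos
    (deriv_deriv_nonpos_of_isLocalMax (ContinuousAt.comp (g := H) hH h₁) (h₁.eventually hmax))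
    (deriv_deriv_nonpos_of_isLocalMax (ContinuousAt.comp (g := H) hH h₂) (h₂.eventually hmax))

theorem le_of_lap_lt {φ ψ : ℝ × ℝ → ℝ} {K : Set (ℝ × ℝ)} (hK : IsCompact K)
    (hφ : ContinuousOn φ K) (hψ : ContinuousOn ψ K)
    (hφ₂ : ∀ z ∈ interior K, ContDiffAt ℝ 2 φ z) (hψ₂ : ∀ z ∈ interior K, ContDiffAt ℝ 2 ψ z)
    (hlap : ∀ z ∈ interior K, lap ψ z < lap φ z) (hle : ∀ z ∈ K \ interior K, φ z ≤ ψ z)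
    {z : ℝ × ℝ} (hz : z ∈ K) : φ z ≤ ψ z := by
  obtain ⟨w, hwK, hmax⟩ := hK.exists_isMaxOn ⟨z, hz⟩ (hφ.sub hψ)
  have hzw : φ z - ψ z ≤ φ w - ψ w := hmax hz
  suffices hw : φ w ≤ ψ w by linarith
  by_cases hw : w ∈ interior K
  · have hmax' : IsLocalMax (fun z => φ z - ψ z) w :=
      hmax.isLocalMax (mem_interior_iff_mem_nhds.1 hw)
    have hnonpos : lap (fun z => φ z - ψ z) w ≤ 0 := lap_nonpos_of_isLocalMax
      ((hφ₂ w hw).continuousAt.sub (hψ₂ w hw).continuousAt) hmax'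
    rw [lap_sub (hφ₂ w hw) (hψ₂ w hw)] at hnonpos
    linarith [hlap w hw]
  · exact hle w ⟨hwK, hw⟩

theorem le_of_lap_lt_of_mem_Icc {φ ψ : ℝ × ℝ → ℝ} (hφ : ContDiff ℝ 2 φ) (hψ : ContDiff ℝ 2 ψ)
    {p q : ℝ × ℝ} (hlap : ∀ z ∈ Icc p q, lap ψ z < lap φ z)
    (hle : ∀ z ∈ Icc p q, z.1 = p.1 ∨ z.1 = q.1 ∨ z.2 = p.2 ∨ z.2 = q.2 → φ z ≤ ψ z)
    {z : ℝ × ℝ} (hz : z ∈ Icc p q) : φ z ≤ ψ z := by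
  refine le_of_lap_lt isCompact_Icc hφ.continuous.continuousOn hψ.continuous.continuousOn
    (fun _ _ => hφ.contDiffAt) (fun _ _ => hψ.contDiffAt)
    (fun z hz => hlap z (interior_subset hz)) (fun z hz => hle z hz.1 ?_) hz
  by_contra! hne
  obtain ⟨⟨hp₁, hp₂⟩, hq₁, hq₂⟩ := hz.1
  refine hz.2 (mem_interior_iff_mem_nhds.2 ?_)
  rw [Icc_prod_eq]
  exact prod_mem_nhds (Icc_mem_nhds (hp₁.lt_of_ne' hne.1) (hq₁.lt_of_ne hne.2.1))
    (Icc_mem_nhds (hp₂.lt_of_ne' hne.2.2.1) (hq₂.lt_of_ne hne.2.2.2))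

/-! ### Decay of the oscillation on a half-cylinder -/

theorem exists_ge_mul_one_add_abs_le_exp (C a : ℝ) {ε b : ℝ} (hε : 0 < ε) (hb : 0 < b) :
    ∃ t ≥ a, C * (1 + |t|) ≤ ε * exp (b * t) := by
  have hlittle : (fun t => C * (t ^ 0 + t ^ 1)) =o[atTop] fun t => exp (b * t) :=
    ((isLittleO_pow_exp_pos_mul_atTop 0 hb).add
      (isLittleO_pow_exp_pos_mul_atTop 1 hb)).const_mul_left C
  obtain ⟨t, hle, hat, ht⟩ :=
    ((hlittle.def hε).and ((eventually_ge_atTop a).and (eventually_ge_atTop 0))).exists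
  refine ⟨t, hat, (le_abs_self _).trans ?_⟩
  simpa [abs_of_nonneg ht] using hle

theorem deriv_deriv_eq {f f' : ℝ → ℝ} {f'' t : ℝ} (hf : ∀ s, HasDerivAt f (f' s) s)
    (hf' : HasDerivAt f' f'' t) : deriv (deriv f) t = f'' := by
  rw [show deriv f = f' from funext fun s => (hf s).deriv]
  exact hf'.deriv

theorem half_le_cos_two_thirds_mul {x : ℝ} (hx : |x| ≤ π / 2) : 1 / 2 ≤ cos (2 / 3 * x) := by
  have hx' : |2 / 3 * x| ≤ π / 3 := by
    rw [abs_mul, abs_of_pos (by norm_num)]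
    linarith
  rw [← cos_pi_div_three, ← cos_abs (2 / 3 * x)]
  exact cos_le_cos_of_nonneg_of_le_pi (abs_nonneg _) (by linarith [pi_pos]) hx'

-- The angular factor is positive on an interval of length `π` and has eigenvalue `4/9`,
-- which beats the growth rates `δ ^ 2, 1 / 4` of the exponentials.
theorem lap_exp_mul_cos_le {K ε δ c : ℝ} (hK : 0 ≤ K) (hε : 0 ≤ ε) (hδ₀ : 0 ≤ δ)
    (hδ : δ ≤ 1 / 2) {z : ℝ × ℝ} (hz : |z.2 - c| ≤ π / 2) :
    lap (fun z => (K * exp (-δ * z.1) + ε * exp (1 / 2 * z.1)) * cos (2 / 3 * (z.2 - c))) z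
      ≤ -(7 / 72) * (K * exp (-δ * z.1) + ε * exp (1 / 2 * z.1)) := by
  have hexp (a t : ℝ) : HasDerivAt (fun s => exp (a * s)) (a * exp (a * t)) t := by
    simpa [mul_comm] using ((hasDerivAt_id t).const_mul a).exp
  have hlin (θ : ℝ) : HasDerivAt (fun θ => 2 / 3 * (θ - c)) (2 / 3) θ := by
    simpa using ((hasDerivAt_id θ).sub_const c).const_mul (2 / 3)
  rw [lap_mul_fst_snd (fun t => K * exp (-δ * t) + ε * exp (1 / 2 * t))
      (fun θ => cos (2 / 3 * (θ - c))),
    deriv_deriv_eq (fun t => ((hexp (-δ) t).const_mul K).fun_add ((hexp (1 / 2) t).const_mul ε))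
      ((((hexp (-δ) z.1).const_mul (-δ)).const_mul K).fun_add
        (((hexp (1 / 2) z.1).const_mul (1 / 2)).const_mul ε)),
    deriv_deriv_eq (fun θ => (hlin θ).cos) ((hlin z.2).sin.fun_neg.mul_const (2 / 3))]
  have hcos : 1 / 2 ≤ cos (2 / 3 * (z.2 - c)) := half_le_cos_two_thirds_mul hz
  have hrate : δ ^ 2 ≤ 1 / 4 := by nlinarith
  set x := K * exp (-δ * z.1)
  set y := ε * exp (1 / 2 * z.1)
  set q := cos (2 / 3 * (z.2 - c))
  have : 0 ≤ x := by positivity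
  have : 0 ≤ y := by positivity
  calc (K * (-δ * (-δ * exp (-δ * z.1))) + ε * (1 / 2 * (1 / 2 * exp (1 / 2 * z.1)))) * q
        + (x + y) * (-(q * (2 / 3)) * (2 / 3))
      = (δ ^ 2 * x + 1 / 4 * y) * q - 4 / 9 * (x + y) * q := by ring
    _ ≤ (1 / 4 * x + 1 / 4 * y) * q - 4 / 9 * (x + y) * q := by gcongr
    _ = -(7 / 36) * ((x + y) * q) := by ring
    _ ≤ -(7 / 36) * ((x + y) * (1 / 2)) := by
      refine mul_le_mul_of_nonpos_left ?_ (by norm_num)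
      gcongr
    _ = -(7 / 72) * (x + y) := by ring

section OscillationDecay

variable {H : ℝ × ℝ → ℝ} {T F δ C : ℝ}

theorem sub_reflect_le_of_le_boundary (hH : ContDiff ℝ 2 H)
    (hper : ∀ t θ, H (t, θ + 2 * π) = H (t, θ)) (hδ₀ : 0 ≤ δ) (hδ : δ ≤ 1 / 2) (hF₀ : 0 ≤ F)
    (hF : ∀ t θ, T ≤ t → |lap H (t, θ)| ≤ F * exp (-δ * t))
    {K ε T' t s θ₀ : ℝ} (hε : 0 < ε) (hK : 24 * F ≤ K)
    (hbdry : ∀ θ, ∀ r ∈ ({T, T'} : Set ℝ),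
      4 * |H (r, θ)| ≤ K * exp (-δ * r) + ε * exp (1 / 2 * r))
    (ht : t ∈ Icc T T') (hs : s ∈ Icc 0 π) :
    H (t, θ₀ + s) - H (t, θ₀ - s) ≤ K * exp (-δ * t) + ε * exp (1 / 2 * t) := by
  set E : ℝ → ℝ := fun t => K * exp (-δ * t) + ε * exp (1 / 2 * t)
  set φ : ℝ × ℝ → ℝ := fun z => H z - H (z.1, 2 * θ₀ - z.2) with hφ
  set ψ : ℝ × ℝ → ℝ := fun z => E z.1 * cos (2 / 3 * (z.2 - (θ₀ + π / 2)))
  have hK₀ : 0 ≤ K := by linarith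
  have hE (t : ℝ) : 0 ≤ E t := by positivity
  have hmid {z : ℝ × ℝ} (hz : z ∈ Icc (T, θ₀) (T', θ₀ + π)) : |z.2 - (θ₀ + π / 2)| ≤ π / 2 :=
    abs_le.2 ⟨by linarith [hz.1.2], by linarith [hz.2.2]⟩
  have hlap : ∀ z ∈ Icc (T, θ₀) (T', θ₀ + π), lap ψ z < lap φ z := by
    intro z hz
    have hψ : lap ψ z ≤ -(7 / 72) * E z.1 := lap_exp_mul_cos_le hK₀ hε.le hδ₀ hδ (hmid hz)
    have h₁ : -(F * exp (-δ * z.1)) ≤ lap H z := (abs_le.1 (hF z.1 z.2 hz.1.1)).1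
    have h₂ := (abs_le.1 (hF z.1 (2 * θ₀ - z.2) hz.1.1)).2
    have hFE : 24 * F * exp (-δ * z.1) < E z.1 :=
      lt_add_of_le_of_pos (by gcongr) (by positivity)
    have : 0 ≤ F * exp (-δ * z.1) := by positivity
    rw [hφ, lap_sub hH.contDiffAt (by fun_prop), lap_reflect]
    linarith
  have hψ {z : ℝ × ℝ} (hz : z ∈ Icc (T, θ₀) (T', θ₀ + π)) : E z.1 * (1 / 2) ≤ ψ z :=
    mul_le_mul_of_nonneg_left (half_le_cos_two_thirds_mul (hmid hz)) (hE _)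
  have hends {z : ℝ × ℝ} (hz : z ∈ Icc (T, θ₀) (T', θ₀ + π)) (hz₁ : z.1 ∈ ({T, T'} : Set ℝ)) :
      φ z ≤ ψ z := by
    have h₁ : 4 * |H z| ≤ E z.1 := hbdry z.2 z.1 hz₁
    have h₂ : 4 * |H (z.1, 2 * θ₀ - z.2)| ≤ E z.1 := hbdry _ z.1 hz₁
    simp only [φ]
    linarith [hψ hz, le_abs_self (H z), neg_abs_le (H (z.1, 2 * θ₀ - z.2))]
  have hsides {z : ℝ × ℝ} (hz : z ∈ Icc (T, θ₀) (T', θ₀ + π)) (hφz : φ z = 0) : φ z ≤ ψ z := by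
    linarith [hψ hz, hE z.1]
  calc H (t, θ₀ + s) - H (t, θ₀ - s) = φ (t, θ₀ + s) := by simp only [φ]; ring_nf
    _ ≤ ψ (t, θ₀ + s) := by
      refine le_of_lap_lt_of_mem_Icc (by fun_prop) (by fun_prop) hlap ?_
        ⟨⟨ht.1, by linarith [hs.1]⟩, ht.2, by linarith [hs.2]⟩
      rintro ⟨r, θ⟩ hz (h | h | rfl | rfl)
      · exact hends hz (Or.inl h)
      · exact hends hz (Or.inr h)
      · exact hsides hz (by simp [φ, two_mul])
      · refine hsides hz ?_
        simp only [φ]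
        rw [← hper r (2 * θ₀ - (θ₀ + π)), sub_eq_zero]
        ring_nf
    _ ≤ E t := mul_le_of_le_one_right (hE t) (cos_le_one _)

theorem sub_reflect_le (hH : ContDiff ℝ 2 H) (hper : ∀ t θ, H (t, θ + 2 * π) = H (t, θ))
    (hδ₀ : 0 ≤ δ) (hδ : δ ≤ 1 / 2) (hF₀ : 0 ≤ F) (hC₀ : 0 ≤ C)
    (hF : ∀ t θ, T ≤ t → |lap H (t, θ)| ≤ F * exp (-δ * t))
    (hC : ∀ t θ, T ≤ t → |H (t, θ)| ≤ C * (1 + |t|))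
    {t s : ℝ} (θ₀ : ℝ) (ht : T ≤ t) (hs : s ∈ Icc 0 π) :
    H (t, θ₀ + s) - H (t, θ₀ - s)
      ≤ (24 * F + 4 * C * (1 + |T|) * exp (δ * T)) * exp (-δ * t) := by
  refine le_of_forall_pos_le_add fun ε hε => ?_
  set ε' := ε / exp (1 / 2 * t)
  have hε' : 0 < ε' := div_pos hε (exp_pos _)
  obtain ⟨T', hT', hbig⟩ := exists_ge_mul_one_add_abs_le_exp (4 * C) t hε' one_half_pos
  have h := sub_reflect_le_of_le_boundary hH hper hδ₀ hδ hF₀ hF (θ₀ := θ₀) hε'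
    (le_add_of_nonneg_right (by positivity : 0 ≤ 4 * C * (1 + |T|) * exp (δ * T))) ?_ ⟨ht, hT'⟩ hs
  · rwa [div_mul_cancel₀ _ (exp_pos _).ne'] at h
  rintro θ r (rfl | rfl)
  · have hexp : exp (δ * r) * exp (-δ * r) = 1 := by rw [← exp_add]; simp
    have h₁ : 0 ≤ F * exp (-δ * r) := by positivity
    have h₂ : 0 ≤ ε' * exp (1 / 2 * r) := by positivity
    linear_combination 4 * hC r θ le_rfl + 24 * h₁ + h₂ - 4 * C * (1 + |r|) * hexp
  · have h₁ : 0 ≤ (24 * F + 4 * C * (1 + |T|) * exp (δ * T)) * exp (-δ * r) := by positivity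
    linarith [hC r θ (ht.trans hT')]

theorem exists_abs_sub_le_mul_exp (hH : ContDiff ℝ 2 H)
    (hper : ∀ t θ, H (t, θ + 2 * π) = H (t, θ)) (hδ₀ : 0 ≤ δ) (hδ : δ ≤ 1 / 2)
    (hF : ∀ t θ, T ≤ t → |lap H (t, θ)| ≤ F * exp (-δ * t))
    (hC : ∀ t θ, T ≤ t → |H (t, θ)| ≤ C * (1 + |t|)) :
    ∃ K, ∀ t θ θ', T ≤ t → |θ - θ'| ≤ 2 * π → |H (t, θ) - H (t, θ')| ≤ K * exp (-δ * t) := by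
  have hF₀ : 0 ≤ F :=
    nonneg_of_mul_nonneg_left ((abs_nonneg _).trans (hF T 0 le_rfl)) (exp_pos _)
  have hC₀ : 0 ≤ C :=
    nonneg_of_mul_nonneg_left ((abs_nonneg _).trans (hC T 0 le_rfl)) (by positivity)
  refine ⟨24 * F + 4 * C * (1 + |T|) * exp (δ * T), fun t θ θ' ht hθ => ?_⟩
  wlog hle : θ' ≤ θ generalizing θ θ'
  · rw [abs_sub_comm]
    exact this θ' θ (by rwa [abs_sub_comm]) (le_of_not_ge hle)
  have hs : (θ - θ') / 2 ∈ Icc 0 π := ⟨by linarith, by linarith [le_abs_self (θ - θ')]⟩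
  have hpos := sub_reflect_le hH hper hδ₀ hδ hF₀ hC₀ hF hC ((θ + θ') / 2) ht hs
  have hneg := sub_reflect_le (H := fun z => -H z) hH.neg (fun t θ => by rw [hper]) hδ₀ hδ hF₀ hC₀
    (fun t θ ht => by rw [lap_neg, abs_neg]; exact hF t θ ht)
    (fun t θ ht => by rw [abs_neg]; exact hC t θ ht) ((θ + θ') / 2) ht hs
  rw [show (θ + θ') / 2 + (θ - θ') / 2 = θ by ring,
    show (θ + θ') / 2 - (θ - θ') / 2 = θ' by ring] at hpos hneg
  exact abs_le.2 ⟨by linarith, by linarith⟩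

end OscillationDecay

/-! ### Interior gradient estimate -/

section GradientEstimate

variable {H : ℝ × ℝ → ℝ} {p : ℝ × ℝ} {M : ℝ}

theorem lap_sq_add_sub_sq (a b c : ℝ) (p z : ℝ × ℝ) :
    lap (fun z => a * (z.1 - p.1) ^ 2 + (b * (z.2 - p.2) - c * (z.2 - p.2) ^ 2)) z
      = 2 * (a - c) := by
  have hsub (c t : ℝ) : HasDerivAt (fun t => t - c) 1 t := (hasDerivAt_id t).sub_const c
  have hsq (c t : ℝ) : HasDerivAt (fun t => (t - c) ^ 2) (2 * (t - c)) t := by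
    simpa using (hsub c t).fun_pow 2
  rw [lap_add_fst_snd (fun x => a * (x - p.1) ^ 2)
      (fun y => b * (y - p.2) - c * (y - p.2) ^ 2),
    deriv_deriv_eq (fun t => (hsq p.1 t).const_mul a) (((hsub p.1 z.1).const_mul 2).const_mul a),
    deriv_deriv_eq (fun t => ((hsub p.2 t).const_mul b).fun_sub ((hsq p.2 t).const_mul c))
      ((((hsub p.2 z.2).const_mul 2).const_mul c).const_sub (b * 1))]
  ring

theorem reflect_mem_closedBall {z : ℝ × ℝ} {r : ℝ} (hz : z ∈ Metric.closedBall p r) :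
    (z.1, 2 * p.2 - z.2) ∈ Metric.closedBall p r := by
  have hdist : dist (2 * p.2 - z.2) p.2 = dist z.2 p.2 := by
    rw [dist_comm z.2, Real.dist_eq, Real.dist_eq]
    ring_nf
  rwa [Metric.mem_closedBall, Prod.dist_eq, hdist]

theorem sub_reflect_le_mul (hH : ContDiff ℝ 2 H) (hM : 0 < M)
    (hbound : ∀ z ∈ Metric.closedBall p 1, |H z| ≤ M)
    (hlap : ∀ z ∈ Metric.closedBall p 1, |lap H z| ≤ M) {r : ℝ} (hr : r ∈ Icc 0 1) :
    H (p.1, p.2 + r) - H (p.1, p.2 - r) ≤ 6 * M * r := by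
  set φ : ℝ × ℝ → ℝ := fun z => H z - H (z.1, 2 * p.2 - z.2) with hφ
  set ψ : ℝ × ℝ → ℝ := fun z => 2 * M * (z.1 - p.1) ^ 2
    + (6 * M * (z.2 - p.2) - 4 * M * (z.2 - p.2) ^ 2) with hψ
  set R := Icc (p.1 - 1, p.2) (p.1 + 1, p.2 + 1)
  have hball {z : ℝ × ℝ} (hz : z ∈ R) : z ∈ Metric.closedBall p 1 := by
    obtain ⟨⟨h₁, h₂⟩, h₃, h₄⟩ := hz
    simp only [Metric.mem_closedBall, Prod.dist_eq, max_le_iff, Real.dist_eq, abs_le]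
    dsimp only at *
    refine ⟨⟨?_, ?_⟩, ?_, ?_⟩ <;> linarith
  have hrefl {z : ℝ × ℝ} (hz : z ∈ R) := reflect_mem_closedBall (hball hz)
  have hlt : ∀ z ∈ R, lap ψ z < lap φ z := by
    intro z hz
    rw [hφ, hψ, lap_sub hH.contDiffAt (by fun_prop), lap_reflect, lap_sq_add_sub_sq]
    linarith [(abs_le.1 (hlap _ (hball hz))).1, (abs_le.1 (hlap _ (hrefl hz))).2]
  have hle : ∀ z ∈ R, z.1 = p.1 - 1 ∨ z.1 = p.1 + 1 ∨ z.2 = p.2 ∨ z.2 = p.2 + 1 → φ z ≤ ψ z := by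
    rintro ⟨x, y⟩ hz hbdry
    have hφ₂ : φ (x, y) ≤ 2 * M := by
      linarith [(abs_le.1 (hbound _ (hball hz))).2, (abs_le.1 (hbound _ (hrefl hz))).1]
    obtain ⟨⟨-, h₀⟩, -, h₁⟩ := hz
    have hM₁ := mul_nonneg hM.le (sub_nonneg.2 h₀)
    have hM₂ := mul_nonneg hM₁ (sub_nonneg.2 h₁)
    have hM₃ := mul_nonneg hM.le (sq_nonneg (x - p.1))
    dsimp only at hM₁ hM₂
    rcases hbdry with rfl | rfl | rfl | rfl
    · simp only [ψ]
      linarith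
    · simp only [ψ]
      linarith
    · simp only [φ, ψ, two_mul, add_sub_cancel_right, sub_self]
      linarith
    · simp only [ψ, add_sub_cancel_left]
      linarith
  have hmem : (p.1, p.2 + r) ∈ R :=
    ⟨⟨by simp, by simpa using hr.1⟩, by simp, by simpa using hr.2⟩
  calc H (p.1, p.2 + r) - H (p.1, p.2 - r) = φ (p.1, p.2 + r) := by simp only [φ]; ring_nf
    _ ≤ ψ (p.1, p.2 + r) := le_of_lap_lt_of_mem_Icc (by fun_prop) (by fun_prop) hlt hle hmem
    _ = 6 * M * r - 4 * M * r ^ 2 := by simp only [ψ]; ring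
    _ ≤ 6 * M * r := sub_le_self _ (by positivity)

theorem abs_deriv_snd_le (hH : ContDiff ℝ 2 H) (hM : 0 < M)
    (hbound : ∀ z ∈ Metric.closedBall p 1, |H z| ≤ M)
    (hlap : ∀ z ∈ Metric.closedBall p 1, |lap H z| ≤ M) :
    |deriv (fun y => H (p.1, y)) p.2| ≤ 3 * M := by
  set D := deriv (fun y => H (p.1, y)) p.2
  have hD : HasDerivAt (fun y => H (p.1, y)) D p.2 :=
    ((by fun_prop : ContDiff ℝ 2 fun y => H (p.1, y)).differentiable (by norm_num) _).hasDerivAt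
  have hodd : HasDerivAt (fun r => H (p.1, p.2 + r) - H (p.1, p.2 - r)) (2 * D) 0 := by
    have h := (HasDerivAt.comp_const_add p.2 0 (by rwa [add_zero])).fun_sub
      (HasDerivAt.comp_const_sub p.2 0 (by rwa [sub_zero]))
    rwa [sub_neg_eq_add, ← two_mul] at h
  have hpos (r : ℝ) (hr : r ∈ Icc 0 1) : |H (p.1, p.2 + r) - H (p.1, p.2 - r)| ≤ 6 * M * r := by
    have hle := sub_reflect_le_mul hH hM hbound hlap hr
    have hneg := sub_reflect_le_mul (H := fun z => -H z) hH.neg hM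
      (by simpa only [abs_neg] using hbound) (by simpa only [lap_neg, abs_neg] using hlap) hr
    exact abs_le.2 ⟨by linarith, hle⟩
  have hlip : ‖2 * D‖ ≤ 6 * M := hodd.le_of_lip' (by positivity) (by
    filter_upwards [Icc_mem_nhds neg_one_lt_zero one_pos] with r hr
    simp only [add_zero, sub_zero, sub_self, norm_eq_abs]
    rcases le_total 0 r with h | h
    · rw [abs_of_nonneg h]
      exact hpos r ⟨h, hr.2⟩
    · rw [abs_of_nonpos h, abs_sub_comm]
      simpa [sub_eq_add_neg] using hpos (-r) ⟨neg_nonneg.2 h, neg_le.1 hr.1⟩)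
  rw [norm_mul, norm_ofNat, norm_eq_abs] at hlip
  linarith

theorem abs_deriv_fst_le (hH : ContDiff ℝ 2 H) (hM : 0 < M)
    (hbound : ∀ z ∈ Metric.closedBall p 1, |H z| ≤ M)
    (hlap : ∀ z ∈ Metric.closedBall p 1, |lap H z| ≤ M) :
    |deriv (fun x => H (x, p.2)) p.1| ≤ 3 * M := by
  have hswap {z : ℝ × ℝ} (hz : z ∈ Metric.closedBall p.swap 1) :
      z.swap ∈ Metric.closedBall p 1 := by
    simpa [Prod.dist_eq, max_comm] using hz
  exact abs_deriv_snd_le (H := fun z => H z.swap) (p := p.swap)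
    (hH.comp (contDiff_snd.prodMk contDiff_fst)) hM (fun z hz => hbound _ (hswap hz))
    (fun z hz => by rw [lap_swap]; exact hlap _ (hswap hz))

end GradientEstimate

/-! ### Integration over the circles of a cylinder -/

section AngularIntegral

/-- The integral of `w` over the circle at height `t` of the cylinder; functions on the cylinder
are functions of `(t, θ)` that are `2π`-periodic in `θ`. -/
noncomputable def angularIntegral (w : ℝ × ℝ → ℝ) (t : ℝ) : ℝ :=
  ∫ θ in (-π)..π, w (t, θ)

variable {w w₁ w₂ : ℝ × ℝ → ℝ}

theorem neg_pi_le_pi : -π ≤ π := neg_le_self pi_pos.le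

theorem intervalIntegrable_angle (hw : Continuous w) (t : ℝ) :
    IntervalIntegrable (fun θ => w (t, θ)) volume (-π) π :=
  (by fun_prop : Continuous fun θ => w (t, θ)).intervalIntegrable _ _

theorem continuous_angularIntegral (hw : Continuous w) : Continuous (angularIntegral w) :=
  intervalIntegral.continuous_parametric_intervalIntegral_of_continuous' (by fun_prop) _ _

theorem angularIntegral_nonneg (hw : 0 ≤ w) : 0 ≤ angularIntegral w :=
  fun _ => intervalIntegral.integral_nonneg neg_pi_le_pi fun _ _ => hw _

theorem angularIntegral_fst (f : ℝ → ℝ) (t : ℝ) :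
    angularIntegral (fun z => f z.1) t = 2 * π * f t := by
  simp only [angularIntegral, intervalIntegral.integral_const, smul_eq_mul]
  ring

theorem angularIntegral_fst_mul (f : ℝ → ℝ) (w : ℝ × ℝ → ℝ) (t : ℝ) :
    angularIntegral (fun z => f z.1 * w z) t = f t * angularIntegral w t :=
  intervalIntegral.integral_const_mul (f t) fun θ => w (t, θ)

theorem angularIntegral_fst_sub (f : ℝ → ℝ) (hw : Continuous w) (t : ℝ) :
    angularIntegral (fun z => f z.1 - w z) t = 2 * π * f t - angularIntegral w t := by
  simp only [angularIntegral]
  rw [intervalIntegral.integral_sub intervalIntegrable_const (intervalIntegrable_angle hw t),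
    intervalIntegral.integral_const, smul_eq_mul]
  ring

theorem abs_angularIntegral_le {C t : ℝ} (hC : ∀ θ, |w (t, θ)| ≤ C) :
    |angularIntegral w t| ≤ 2 * π * C := by
  have hle := intervalIntegral.norm_integral_le_of_norm_le_const (a := -π) (b := π)
    (f := fun θ => w (t, θ)) fun θ _ => hC θ
  refine hle.trans_eq ?_
  rw [sub_neg_eq_add, ← two_mul, abs_of_pos two_pi_pos, mul_comm]

theorem angularIntegral_mono {t : ℝ} (hw₁ : Continuous w₁) (hw₂ : Continuous w₂)
    (hle : ∀ θ, w₁ (t, θ) ≤ w₂ (t, θ)) : angularIntegral w₁ t ≤ angularIntegral w₂ t :=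
  intervalIntegral.integral_mono_on neg_pi_le_pi (intervalIntegrable_angle hw₁ t)
    (intervalIntegrable_angle hw₂ t) fun θ _ => hle θ

theorem hasDerivAt_angularIntegral (hw : ContDiff ℝ 1 w) (t : ℝ) :
    HasDerivAt (angularIntegral w) (angularIntegral (fun z => fderiv ℝ w z (1, 0)) t) t := by
  have hw' : Continuous fun z => fderiv ℝ w z (1, 0) :=
    (hw.continuous_fderiv (by norm_num)).clm_apply continuous_const
  obtain ⟨C, hC⟩ := (isCompact_Icc.prod isCompact_uIcc :
    IsCompact (Icc (t - 1) (t + 1) ×ˢ uIcc (-π) π)).exists_bound_of_continuousOn hw'.continuousOn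
  refine (intervalIntegral.hasDerivAt_integral_of_dominated_loc_of_deriv_le
    (F := fun t θ => w (t, θ)) (F' := fun t θ => fderiv ℝ w (t, θ) (1, 0)) (bound := fun _ => C)
    (Icc_mem_nhds (sub_one_lt t) (lt_add_one t)) (.of_forall fun s => ?_)
    (intervalIntegrable_angle hw.continuous t)
    (by fun_prop : Continuous fun θ => fderiv ℝ w (t, θ) (1, 0)).aestronglyMeasurable
    (.of_forall fun θ hθ s hs => hC (s, θ) ⟨hs, uIoc_subset_uIcc hθ⟩)
    intervalIntegrable_const (.of_forall fun θ _ s _ => ?_)).2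
  · exact (by fun_prop : Continuous fun θ => w (s, θ)).aestronglyMeasurable
  · exact ((hw.differentiable (by norm_num) (s, θ)).hasFDerivAt.comp_hasDerivAt s
      ((hasDerivAt_id s).prodMk (hasDerivAt_const s θ)))

-- The `θ`-derivative contributes nothing because `w` is periodic.
theorem hasDerivAt_angularIntegral_fderiv (hw : ContDiff ℝ 2 w)
    (hper : ∀ t θ, w (t, θ + 2 * π) = w (t, θ)) (t : ℝ) :
    HasDerivAt (angularIntegral fun z => fderiv ℝ w z (1, 0)) (angularIntegral (lap w) t) t := by
  have hfderiv (v : ℝ × ℝ) : ContDiff ℝ 1 fun z => fderiv ℝ w z v :=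
    (hw.fderiv_right (m := 1) (by norm_num)).clm_apply contDiff_const
  have hsecond (z u v : ℝ × ℝ) :
      fderiv ℝ (fun z => fderiv ℝ w z v) z u = fderiv ℝ (fderiv ℝ w) z u v := by
    have hd := (hw.fderiv_right (m := 1) (by norm_num)).differentiable (by norm_num) z
    rw [(hd.hasFDerivAt.clm_apply (hasFDerivAt_const v z)).fderiv]
    simp
  have hcont (v : ℝ × ℝ) : Continuous fun z => fderiv ℝ (fderiv ℝ w) z v v := by
    have := (hw.fderiv_right (m := 1) (by norm_num)).continuous_fderiv (by norm_num)
    fun_prop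
  have hangle : ∫ θ in (-π)..π, fderiv ℝ (fderiv ℝ w) (t, θ) (0, 1) (0, 1) = 0 := by
    rw [intervalIntegral.integral_eq_sub_of_hasDerivAt (f := fun θ => fderiv ℝ w (t, θ) (0, 1))
      (fun θ _ => ?_) (intervalIntegrable_angle (hcont _) t), sub_eq_zero]
    · have hd (θ : ℝ) := deriv_snd_eq_fderiv (hw.differentiable (by norm_num) (t, θ))
      have hshift := deriv_comp_add_const (fun θ => w (t, θ)) (2 * π) (-π)
      simp only [hper] at hshift
      rw [← hd π, ← hd (-π), hshift, show -π + 2 * π = π by ring]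
    · rw [← hsecond]
      exact ((hfderiv _).differentiable (by norm_num) (t, θ)).hasFDerivAt.comp_hasDerivAt θ
        ((hasDerivAt_const θ t).prodMk (hasDerivAt_id θ))
  refine (hasDerivAt_angularIntegral (hfderiv (1, 0)) t).congr_deriv ?_
  simp only [angularIntegral, hsecond, fun z => lap_eq_fderiv_fderiv (hw.contDiffAt (x := z))]
  rw [intervalIntegral.integral_add (intervalIntegrable_angle (hcont _) t)
    (intervalIntegrable_angle (hcont _) t), hangle, add_zero]

theorem two_pi_mul_exp_le_angularIntegral_exp (hw : Continuous w) {b t : ℝ}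
    (hb : 2 * π * b ≤ angularIntegral w t) :
    2 * π * exp b ≤ angularIntegral (fun z => exp (w z)) t := by
  have htangent (θ : ℝ) : exp b * (w (t, θ) - b + 1) ≤ exp (w (t, θ)) := by
    rw [← sub_add_cancel (w (t, θ)) b, exp_add (w (t, θ) - b), mul_comm, add_sub_cancel_right]
    exact mul_le_mul_of_nonneg_right (add_one_le_exp _) (exp_pos b).le
  have hint : angularIntegral (fun z => exp b * (w z - b + 1)) t
      = exp b * (angularIntegral w t - 2 * π * b + 2 * π) := by
    have hi := intervalIntegrable_angle hw t
    simp only [angularIntegral, intervalIntegral.integral_const_mul]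
    rw [intervalIntegral.integral_add (hi.sub intervalIntegrable_const) intervalIntegrable_const,
      intervalIntegral.integral_sub hi intervalIntegrable_const]
    simp only [intervalIntegral.integral_const, smul_eq_mul]
    ring
  calc 2 * π * exp b ≤ exp b * (angularIntegral w t - 2 * π * b + 2 * π) := by
        nlinarith [exp_pos b]
    _ = angularIntegral (fun z => exp b * (w z - b + 1)) t := hint.symm
    _ ≤ _ := angularIntegral_mono (by fun_prop) (by fun_prop) htangent

end AngularIntegral

/-! ### Log-polar coordinates -/

section LogPolar

/-- Log-polar coordinates on the punctured plane: `(t, θ)` is sent to the point `exp (t + i θ)`.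
The cylinder `ℝ × ℝ / 2πℤ` is thereby identified conformally with `ℝ² ∖ {0}`. -/
noncomputable def logPolar (z : ℝ × ℝ) : ℝ × ℝ := (exp z.1 * cos z.2, exp z.1 * sin z.2)

/-- The derivative of `logPolar` at `z`. -/
noncomputable def fderivLogPolar (z : ℝ × ℝ) : ℝ × ℝ →L[ℝ] ℝ × ℝ :=
  (Matrix.toLin (.finTwoProd ℝ) (.finTwoProd ℝ)
    !![exp z.1 * cos z.2, exp z.1 * -sin z.2;
      exp z.1 * sin z.2, exp z.1 * cos z.2]).toContinuousLinearMap

theorem contDiff_logPolar {n : WithTop ℕ∞} : ContDiff ℝ n logPolar := by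
  unfold logPolar
  fun_prop

theorem continuous_logPolar : Continuous logPolar :=
  contDiff_logPolar.continuous (n := 0)

theorem logPolar_add_two_pi (t θ : ℝ) : logPolar (t, θ + 2 * π) = logPolar (t, θ) := by
  simp [logPolar]

theorem continuous_nrm : Continuous nrm := by
  unfold nrm
  fun_prop

theorem norm_le_nrm (x : ℝ × ℝ) : ‖x‖ ≤ nrm x :=
  max_le (abs_le_sqrt (by nlinarith [sq_nonneg x.2])) (abs_le_sqrt (by nlinarith [sq_nonneg x.1]))

theorem nrm_logPolar (z : ℝ × ℝ) : nrm (logPolar z) = exp z.1 := by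
  have hsq : (exp z.1 * cos z.2) ^ 2 + (exp z.1 * sin z.2) ^ 2 = exp z.1 ^ 2 := by
    linear_combination exp z.1 ^ 2 * sin_sq_add_cos_sq z.2
  rw [nrm, logPolar, hsq, sqrt_sq (exp_pos _).le]

theorem logPolar_ne_zero (z : ℝ × ℝ) : logPolar z ≠ 0 := fun h => by
  have := nrm_logPolar z
  simp [h, nrm, (exp_pos z.1).ne] at this

theorem add_logPolar_mem_closedBall (p : ℝ × ℝ) {s t : ℝ} (hs : 0 < s) (ht : t < log s) (θ : ℝ) :
    p + logPolar (t, θ) ∈ Metric.closedBall p s := by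
  rw [Metric.mem_closedBall, dist_eq_norm, add_sub_cancel_left]
  calc ‖logPolar (t, θ)‖ ≤ exp t := (norm_le_nrm _).trans_eq (nrm_logPolar _)
    _ ≤ s := ((lt_log_iff_exp_lt hs).1 ht).le

theorem logPolar_eq_polarCoord_symm (z : ℝ × ℝ) :
    logPolar z = polarCoord.symm (exp z.1, z.2) := by
  simp [logPolar, polarCoord_symm_apply]

theorem injOn_logPolar : InjOn logPolar (univ ×ˢ Ioo (-π) π) := by
  rintro ⟨t, θ⟩ ⟨-, hθ⟩ ⟨t', θ'⟩ ⟨-, hθ'⟩ h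
  rw [logPolar_eq_polarCoord_symm, logPolar_eq_polarCoord_symm] at h
  have := polarCoord.symm.injOn (x₁ := (exp t, θ)) (x₂ := (exp t', θ'))
    ⟨exp_pos t, hθ⟩ ⟨exp_pos t', hθ'⟩ h
  simpa using this

theorem image_logPolar : logPolar '' (univ ×ˢ Ioo (-π) π) = polarCoord.source := by
  rw [← polarCoord.symm_image_target_eq_source]
  apply subset_antisymm
  · rintro _ ⟨⟨t, θ⟩, ⟨-, hθ⟩, rfl⟩
    exact ⟨(exp t, θ), ⟨exp_pos t, hθ⟩, (logPolar_eq_polarCoord_symm (t, θ)).symm⟩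
  · rintro _ ⟨⟨r, θ⟩, ⟨hr, hθ⟩, rfl⟩
    exact ⟨(log r, θ), ⟨mem_univ _, hθ⟩, by rw [logPolar_eq_polarCoord_symm, exp_log hr]⟩

theorem exists_logPolar_eq {x : ℝ × ℝ} (hx : 0 < nrm x) :
    ∃ θ ∈ Icc (-π) π, logPolar (log (nrm x), θ) = x := by
  have hnorm : ‖(⟨x.1, x.2⟩ : ℂ)‖ = nrm x := by
    rw [Complex.norm_def, Complex.normSq_mk, nrm, sq, sq]
  refine ⟨Complex.arg ⟨x.1, x.2⟩, Ioc_subset_Icc_self (Complex.arg_mem_Ioc _), ?_⟩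
  simp only [logPolar, exp_log hx]
  simp only [← hnorm, Complex.norm_mul_cos_arg, Complex.norm_mul_sin_arg]

theorem hasDerivAt_logPolar_fst (t θ : ℝ) :
    HasDerivAt (fun s => logPolar (s, θ)) (logPolar (t, θ)) t :=
  ((hasDerivAt_exp t).mul_const (cos θ)).prodMk ((hasDerivAt_exp t).mul_const (sin θ))

theorem hasDerivAt_logPolar_snd (t θ : ℝ) :
    HasDerivAt (fun s => logPolar (t, s)) (exp t * -sin θ, exp t * cos θ) θ :=
  ((hasDerivAt_cos θ).const_mul (exp t)).prodMk ((hasDerivAt_sin θ).const_mul (exp t))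

theorem lap_comp_logPolar {G : ℝ × ℝ → ℝ} (p z : ℝ × ℝ)
    (hG : ContDiffAt ℝ 2 G (p + logPolar z)) :
    lap (fun z => G (p + logPolar z)) z = exp (2 * z.1) * lap G (p + logPolar z) := by
  have hθθ : HasDerivAt (fun θ => (exp z.1 * -sin θ, exp z.1 * cos θ)) (-logPolar z) z.2 := by
    convert ((hasDerivAt_sin z.2).neg.const_mul (exp z.1)).prodMk
      ((hasDerivAt_cos z.2).const_mul (exp z.1)) using 1
    · simp
    · simp [logPolar]
  rw [lap_eq_fderiv_fderiv hG, lap,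
    deriv_deriv_comp_curve (γ := fun s => p + logPolar (s, z.2)) hG
      (fun t => (hasDerivAt_logPolar_fst t z.2).const_add p) (hasDerivAt_logPolar_fst z.1 z.2),
    deriv_deriv_comp_curve (γ := fun s => p + logPolar (z.1, s)) hG
      (fun θ => (hasDerivAt_logPolar_snd z.1 θ).const_add p) hθθ, Prod.mk.eta]
  set D := fderiv ℝ (fderiv ℝ G) (p + logPolar z)
  have hquad (a b : ℝ) : D (a, b) (a, b) = a * a * D (1, 0) (1, 0) + a * b * D (1, 0) (0, 1)
      + a * b * D (0, 1) (1, 0) + b * b * D (0, 1) (0, 1) := by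
    have : ((a, b) : ℝ × ℝ) = a • (1, 0) + b • (0, 1) := by simp
    rw [this]
    simp only [map_add, map_smul, add_apply, smul_apply, smul_eq_mul]
    ring
  rw [hquad (exp z.1 * -sin z.2), map_neg, show D (logPolar z) (logPolar z) = _ from hquad _ _,
    two_mul, exp_add]
  linear_combination
    exp z.1 ^ 2 * (D (1, 0) (1, 0) + D (0, 1) (0, 1)) * sin_sq_add_cos_sq z.2

theorem hasFDerivAt_logPolar (z : ℝ × ℝ) : HasFDerivAt logPolar (fderivLogPolar z) z := by
  rw [fderivLogPolar, Matrix.toLin_finTwoProd_toContinuousLinearMap]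
  have hexp := (hasDerivAt_exp z.1).comp_hasFDerivAt z (hasFDerivAt_fst (𝕜 := ℝ))
  refine HasFDerivAt.congr_fderiv (HasFDerivAt.prodMk (𝕜 := ℝ)
    (hexp.mul ((hasDerivAt_cos z.2).comp_hasFDerivAt z hasFDerivAt_snd))
    (hexp.mul ((hasDerivAt_sin z.2).comp_hasFDerivAt z hasFDerivAt_snd))) ?_
  ext <;> simp <;> ring

theorem det_fderivLogPolar (z : ℝ × ℝ) : (fderivLogPolar z).det = exp (2 * z.1) := by
  rw [two_mul, exp_add, fderivLogPolar, LinearMap.det_toContinuousLinearMap, LinearMap.det_toLin,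
    Matrix.det_fin_two_of]
  linear_combination exp z.1 ^ 2 * sin_sq_add_cos_sq z.2

theorem angularIntegral_eq_setIntegral_Ioo (w : ℝ × ℝ → ℝ) (t : ℝ) :
    angularIntegral w t = ∫ θ in Ioo (-π) π, w (t, θ) := by
  rw [angularIntegral, intervalIntegral.integral_of_le neg_pi_le_pi, integral_Ioc_eq_integral_Ioo]

variable {f : ℝ × ℝ → ℝ}

theorem integrableOn_exp_mul_comp_logPolar (hf : Integrable f) :
    IntegrableOn (fun z => exp (2 * z.1) * f (logPolar z)) (univ ×ˢ Ioo (-π) π) := by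
  have := (integrableOn_image_iff_integrableOn_abs_det_fderiv_smul volume
    (MeasurableSet.univ.prod measurableSet_Ioo)
    (fun z _ => (hasFDerivAt_logPolar z).hasFDerivWithinAt) injOn_logPolar f).1 hf.integrableOn
  simpa only [det_fderivLogPolar, abs_of_pos (exp_pos _), smul_eq_mul] using this

theorem integrable_angularIntegral_comp_logPolar (hf : Integrable f) :
    Integrable (angularIntegral fun z => exp (2 * z.1) * f (logPolar z)) := by
  have hprod : Integrable (fun z : ℝ × ℝ => exp (2 * z.1) * f (logPolar z))
      ((volume.restrict univ).prod (volume.restrict (Ioo (-π) π))) := by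
    rw [Measure.prod_restrict]
    exact integrableOn_exp_mul_comp_logPolar hf
  rw [funext (angularIntegral_eq_setIntegral_Ioo fun z => exp (2 * z.1) * f (logPolar z))]
  simpa using hprod.integral_prod_left

theorem integral_angularIntegral_comp_logPolar (hf : Integrable f) :
    ∫ t, angularIntegral (fun z => exp (2 * z.1) * f (logPolar z)) t = ∫ x, f x := by
  have hcov := integral_image_eq_integral_abs_det_fderiv_smul volume
    (MeasurableSet.univ.prod measurableSet_Ioo)
    (fun z _ => (hasFDerivAt_logPolar z).hasFDerivWithinAt) injOn_logPolar f
  simp only [det_fderivLogPolar, abs_of_pos (exp_pos _), smul_eq_mul] at hcov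
  rw [image_logPolar, setIntegral_congr_set polarCoord_source_ae_eq_univ, setIntegral_univ,
    Measure.volume_eq_prod, setIntegral_prod _ (integrableOn_exp_mul_comp_logPolar hf)] at hcov
  simpa only [angularIntegral_eq_setIntegral_Ioo, Measure.restrict_univ,
    Measure.volume_eq_prod ℝ ℝ] using hcov.symm

end LogPolar

/-! ### Mean values over discs -/

section MeanValue

-- Let `s → -∞` in the midpoint inequality `f ((s + t) / 2) ≤ (f s + f t) / 2`.
theorem le_of_convexOn_Iio_of_tendsto_atBot {f : ℝ → ℝ} {b L t : ℝ}
    (hf : ConvexOn ℝ (Iio b) f) (hL : Tendsto f atBot (𝓝 L)) (ht : t < b) : L ≤ f t := by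
  have hmid : ∀ᶠ s in atBot, f (2⁻¹ * s + 2⁻¹ * t) ≤ 2⁻¹ * f s + 2⁻¹ * f t := by
    filter_upwards [eventually_lt_atBot b] with s hs
    exact hf.2 hs ht (by norm_num) (by norm_num) (by norm_num)
  have hleft : Tendsto (fun s => f (2⁻¹ * s + 2⁻¹ * t)) atBot (𝓝 L) :=
    hL.comp (tendsto_atBot_add_const_right _ _
      (tendsto_id.const_mul_atBot (by norm_num : (0 : ℝ) < 2⁻¹)))
  have := le_of_tendsto_of_tendsto hleft ((hL.const_mul 2⁻¹).add_const _) hmid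
  linarith

variable {G h w : ℝ × ℝ → ℝ} {p : ℝ × ℝ} {s c F : ℝ}

theorem tendsto_angularIntegral_comp_logPolar_atBot (hG : Continuous G) (p : ℝ × ℝ) :
    Tendsto (angularIntegral fun z => G (p + logPolar z)) atBot (𝓝 (2 * π * G p)) := by
  have hradius : Continuous (angularIntegral fun z => G (p + (z.1 * cos z.2, z.1 * sin z.2))) :=
    continuous_angularIntegral (by fun_prop)
  have hzero : angularIntegral (fun z => G (p + (z.1 * cos z.2, z.1 * sin z.2))) 0
      = 2 * π * G p := by
    rw [← angularIntegral_fst (fun _ => G p) 0]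
    simp [angularIntegral, Prod.mk_zero_zero]
  exact hzero ▸ (hradius.tendsto 0).comp tendsto_exp_atBot

theorem two_pi_mul_le_angularIntegral (hG : ContDiff ℝ 2 G) (hs : 0 < s)
    (hF : ∀ y ∈ Metric.closedBall p s, -F ≤ lap G y) {t : ℝ} (ht : t < log s) :
    2 * π * G p
      ≤ angularIntegral (fun z => G (p + logPolar z)) t + π * F / 2 * exp (2 * t) := by
  set H : ℝ × ℝ → ℝ := fun z => G (p + logPolar z)
  have hH : ContDiff ℝ 2 H := hG.comp (contDiff_const.add contDiff_logPolar)
  have hper (t θ : ℝ) : H (t, θ + 2 * π) = H (t, θ) := by simp only [H, logPolar_add_two_pi]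
  have hexp (t : ℝ) : HasDerivAt (fun s => exp (2 * s)) (2 * exp (2 * t)) t := by
    simpa [mul_comm] using ((hasDerivAt_id t).const_mul 2).exp
  have hlap (t : ℝ) (ht : t < log s) :
      0 ≤ angularIntegral (lap H) t + π * F / 2 * (2 * (2 * exp (2 * t))) := by
    have hle : angularIntegral (fun z => -F * exp (2 * z.1)) t ≤ angularIntegral (lap H) t :=
      angularIntegral_mono (by fun_prop) (continuous_lap hH) fun θ => by
        rw [lap_comp_logPolar p (t, θ) hG.contDiffAt, mul_comm]
        exact mul_le_mul_of_nonneg_left (hF _ (add_logPolar_mem_closedBall p hs ht θ))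
          (exp_pos _).le
    rw [angularIntegral_fst fun t => -F * exp (2 * t)] at hle
    linarith
  have hconvex : ConvexOn ℝ (Iio (log s))
      fun t => angularIntegral H t + π * F / 2 * exp (2 * t) := by
    refine convexOn_of_hasDerivWithinAt2_nonneg (convex_Iio _)
      (Continuous.continuousOn ((continuous_angularIntegral hH.continuous).add (by fun_prop)))
      (fun t _ => ((hasDerivAt_angularIntegral (hH.of_le (by norm_num)) t).add
        ((hexp t).const_mul (π * F / 2))).hasDerivWithinAt)
      (fun t _ => ((hasDerivAt_angularIntegral_fderiv hH hper t).add
        (((hexp t).const_mul 2).const_mul (π * F / 2))).hasDerivWithinAt) fun t ht => ?_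
    rw [interior_Iio] at ht
    exact hlap t ht
  refine le_of_convexOn_Iio_of_tendsto_atBot (t := t) hconvex ?_ ht
  have hexp₂ : Tendsto (fun t => exp (2 * t)) atBot (𝓝 0) :=
    tendsto_exp_atBot.comp (tendsto_id.const_mul_atBot two_pos)
  simpa using (tendsto_angularIntegral_comp_logPolar_atBot hG.continuous p).add
    (hexp₂.const_mul (π * F / 2))

theorem exp_mul_indicator_comp_logPolar (h : ℝ × ℝ → ℝ) (hs : 0 < s) :
    (angularIntegral fun z => exp (2 * z.1) * {y | nrm y < s}.indicator h (logPolar z))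
      = (Iio (log s)).indicator fun t =>
          exp (2 * t) * angularIntegral (fun z => h (logPolar z)) t := by
  funext t
  rw [angularIntegral_fst_mul fun t => exp (2 * t)]
  have hmem (θ : ℝ) : logPolar (t, θ) ∈ {y | nrm y < s} ↔ t < log s := by
    rw [mem_ofPred_eq, nrm_logPolar, lt_log_iff_exp_lt hs]
  by_cases ht : t < log s
  · simp [angularIntegral, indicator, hmem, ht]
  · simp [angularIntegral, indicator, hmem, ht]

theorem integral_exp_two_mul_Iio (hs : 0 < s) :
    ∫ t in Iio (log s), exp (2 * t) = s ^ 2 / 2 := by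
  rw [← integral_Iic_eq_integral_Iio, integral_exp_mul_Iic two_pos, mul_comm 2, exp_mul,
    exp_log hs, rpow_two]

theorem mul_sq_div_two_le_setIntegral_closedBall (hh : Continuous h) (hs : 0 < s)
    (hpos : ∀ y ∈ Metric.closedBall p s, 0 ≤ h y)
    (hc : ∀ t < log s, c ≤ angularIntegral (fun z => h (p + logPolar z)) t) :
    c * s ^ 2 / 2 ≤ ∫ y in Metric.closedBall p s, h y := by
  set D : Set (ℝ × ℝ) := {y | nrm y < s}
  have hD : MeasurableSet D := (isOpen_lt continuous_nrm continuous_const).measurableSet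
  have hDball : D ⊆ Metric.closedBall 0 s := fun y hy =>
    mem_closedBall_zero_iff.2 ((norm_le_nrm y).trans (le_of_lt hy))
  have hball : IntegrableOn (fun y => h (p + y)) (Metric.closedBall 0 s) :=
    (by fun_prop : Continuous fun y => h (p + y)).continuousOn.integrableOn_compact
      (isCompact_closedBall _ _)
  have hdisc : Integrable (D.indicator fun y => h (p + y)) :=
    (hball.mono_set hDball).integrable_indicator hD
  have hint := integrable_angularIntegral_comp_logPolar hdisc
  rw [exp_mul_indicator_comp_logPolar _ hs, integrable_indicator_iff measurableSet_Iio] at hint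
  calc c * s ^ 2 / 2 = ∫ t in Iio (log s), exp (2 * t) * c := by
        rw [integral_mul_const, integral_exp_two_mul_Iio hs]
        ring
    _ ≤ ∫ t in Iio (log s), exp (2 * t) * angularIntegral (fun z => h (p + logPolar z)) t :=
        setIntegral_mono_on
          (((integrableOn_exp_mul_Iic two_pos _).mono_set Iio_subset_Iic_self).mul_const c) hint
          measurableSet_Iio fun t ht => mul_le_mul_of_nonneg_left (hc t ht) (exp_pos _).le
    _ = ∫ y in D, h (p + y) := by
        rw [← integral_indicator measurableSet_Iio,
          ← exp_mul_indicator_comp_logPolar (fun y => h (p + y)) hs,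
          integral_angularIntegral_comp_logPolar hdisc, integral_indicator hD]
    _ ≤ ∫ y in Metric.closedBall 0 s, h (p + y) :=
        setIntegral_mono_set hball (ae_restrict_of_forall_mem measurableSet_closedBall fun y hy =>
          hpos _ (by simpa [dist_eq_norm] using hy)) hDball.eventuallyLE
    _ = ∫ y in Metric.closedBall p s, h y := by
        rw [← (measurePreserving_add_left volume p).setIntegral_preimage_emb
          (Homeomorph.addLeft p).measurableEmbedding h]
        simp

theorem pi_mul_sq_mul_le_setIntegral_closedBall (hG : ContDiff ℝ 2 G) (hs : 0 < s)
    (hpos : ∀ y ∈ Metric.closedBall p s, 0 ≤ G y)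
    (hlap : ∀ y ∈ Metric.closedBall p s, 0 ≤ lap G y) :
    π * s ^ 2 * G p ≤ ∫ y in Metric.closedBall p s, G y := by
  have := mul_sq_div_two_le_setIntegral_closedBall (c := 2 * π * G p) hG.continuous hs hpos
    fun t ht => by
      simpa using two_pi_mul_le_angularIntegral (F := 0) hG hs (by simpa using hlap) ht
  linarith

theorem pi_mul_sq_mul_exp_le_setIntegral_closedBall (hw : ContDiff ℝ 2 w) (hs : 0 < s)
    (hlap : ∀ y ∈ Metric.closedBall p s, -F ≤ lap w y) (hF : 0 ≤ F) (hFs : F * s ^ 2 ≤ 4) :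
    π * s ^ 2 * exp (w p - 1) ≤ ∫ y in Metric.closedBall p s, exp (w y) := by
  have hcont := hw.continuous
  have hangle (t : ℝ) (ht : t < log s) :
      2 * π * exp (w p - 1) ≤ angularIntegral (fun z => exp (w (p + logPolar z))) t := by
    have hmean := two_pi_mul_le_angularIntegral hw hs hlap ht
    have hexp : exp (2 * t) ≤ s ^ 2 := by
      rw [mul_comm, exp_mul, rpow_two]
      gcongr
      exact ((lt_log_iff_exp_lt hs).1 ht).le
    refine two_pi_mul_exp_le_angularIntegral_exp (w := fun z => w (p + logPolar z))
      (hcont.comp (continuous_const.add continuous_logPolar)) ?_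
    nlinarith [mul_le_mul_of_nonneg_left hexp hF, pi_pos]
  have := mul_sq_div_two_le_setIntegral_closedBall (by fun_prop) hs
    (fun y _ => (exp_pos (w y)).le) hangle
  linarith

end MeanValue

/-! ### Small energy bounds the solution -/

section SmallEnergy

-- Maximize the weighted values `(1 - dist z p) ^ 2 * f j z` over `j` and `z`.
theorem exists_closedBall_le_four_mul {X ι : Type*} [PseudoMetricSpace X] [ProperSpace X]
    [Finite ι] {f : ι → X → ℝ} (hf : ∀ j, Continuous (f j)) (hf₀ : ∀ j x, 0 ≤ f j x) {k : ι}
    {p : X} (hkp : 0 < f k p) :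
    ∃ k₀ y r, 0 < r ∧ Metric.closedBall y r ⊆ Metric.closedBall p 1 ∧
      f k p ≤ 4 * r ^ 2 * f k₀ y ∧ ∀ j, ∀ z ∈ Metric.closedBall y r, f j z ≤ 4 * f k₀ y := by
  have hmax (j : ι) := (isCompact_closedBall p 1).exists_isMaxOn ⟨p, by simp⟩
    (f := fun z => (1 - dist z p) ^ 2 * f j z) (by have := hf j; fun_prop)
  choose y hyp hymax using hmax
  have : Nonempty ι := ⟨k⟩
  obtain ⟨k₀, hk₀⟩ := Finite.exists_max fun j => (1 - dist (y j) p) ^ 2 * f j (y j)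
  set d := 1 - dist (y k₀) p with hd
  have hweight (j : ι) {z : X} (hz : z ∈ Metric.closedBall p 1) :
      (1 - dist z p) ^ 2 * f j z ≤ d ^ 2 * f k₀ (y k₀) := (hymax j hz).trans (hk₀ j)
  have hcentre : f k p ≤ d ^ 2 * f k₀ (y k₀) := by
    simpa using hweight k (Metric.mem_closedBall_self zero_le_one)
  have hd₀ : 0 < d := by
    refine (sub_nonneg.2 (hyp k₀)).lt_of_ne fun h => ?_
    rw [← hd] at h
    simp only [← h] at hcentre
    linarith
  have hdist {z : X} (hz : z ∈ Metric.closedBall (y k₀) (d / 2)) : d / 2 ≤ 1 - dist z p := by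
    have := dist_triangle z (y k₀) p
    have := Metric.mem_closedBall.1 hz
    linarith
  have hsub : Metric.closedBall (y k₀) (d / 2) ⊆ Metric.closedBall p 1 := fun z hz => by
    have := hdist hz
    exact Metric.mem_closedBall.2 (by linarith)
  refine ⟨k₀, y k₀, d / 2, half_pos hd₀, hsub, by linarith, fun j z hz => ?_⟩
  have hsq := pow_le_pow_left₀ (half_pos hd₀).le (hdist hz) 2
  have hle := (mul_le_mul_of_nonneg_right hsq (hf₀ j z)).trans (hweight j (hsub hz))
  exact le_of_mul_le_mul_left (by linarith) (pow_pos hd₀ 2)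

theorem exp_le_of_setIntegral_closedBall_lt {ι : Type*} [Fintype ι] {A : Matrix ι ι ℝ}
    {W : ι → ℝ × ℝ → ℝ} {a : ℝ} {p : ℝ × ℝ} (hA : ∀ j k, 0 ≤ A j k) (ha : 0 < a)
    (hrow : ∀ j, ∑ k, A j k ≤ a) (hW : ∀ k, ContDiff ℝ 2 (W k))
    (hlap : ∀ j, ∀ z ∈ Metric.closedBall p 1, -∑ k, A j k * exp (W k z) ≤ lap (W j) z)
    (hsmall : ∀ k, ∫ y in Metric.closedBall p 1, exp (W k y) < π / (exp 1 * a)) (k : ι) :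
    exp (W k p) ≤ 4 / a := by
  by_contra! hlarge
  have hcont (j : ι) : Continuous fun z => exp (W j z) := (hW j).continuous.rexp
  obtain ⟨k₀, y, r, hr, hsub, hkp, hmax⟩ :=
    exists_closedBall_le_four_mul hcont (fun _ _ => (exp_pos _).le) (exp_pos (W k p))
  set Λ := exp (W k₀ y) with hΛ
  have hΛ₀ : 0 < Λ := exp_pos _
  set s := √(1 / (a * Λ))
  have hs₀ : 0 < s := sqrt_pos.2 (by positivity)
  have hs₂ : s ^ 2 = 1 / (a * Λ) := sq_sqrt (by positivity)
  have hsr : s ≤ r := by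
    refine sqrt_le_iff.2 ⟨hr.le, ?_⟩
    rw [div_le_iff₀ (by positivity)]
    have := (div_lt_iff₀ ha).1 (hlarge.trans_le hkp)
    linarith
  have hball : Metric.closedBall y s ⊆ Metric.closedBall y r :=
    Metric.closedBall_subset_closedBall hsr
  have hlap₀ (z : ℝ × ℝ) (hz : z ∈ Metric.closedBall y s) : -(4 * a * Λ) ≤ lap (W k₀) z := by
    refine le_trans (neg_le_neg ?_) (hlap k₀ z (hsub (hball hz)))
    calc ∑ k, A k₀ k * exp (W k z) ≤ ∑ k, A k₀ k * (4 * Λ) :=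
          Finset.sum_le_sum fun j _ => mul_le_mul_of_nonneg_left (hmax j z (hball hz)) (hA k₀ j)
      _ = (∑ k, A k₀ k) * (4 * Λ) := by rw [Finset.sum_mul]
      _ ≤ a * (4 * Λ) := mul_le_mul_of_nonneg_right (hrow k₀) (by positivity)
      _ = 4 * a * Λ := by ring
  have hmass := pi_mul_sq_mul_exp_le_setIntegral_closedBall (hW k₀) hs₀ hlap₀ (by positivity)
    (by rw [hs₂]; field_simp; rfl)
  refine (hsmall k₀).not_ge ?_
  calc π / (exp 1 * a) = π * s ^ 2 * exp (W k₀ y - 1) := by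
        rw [hs₂, exp_sub, ← hΛ]
        field_simp
    _ ≤ ∫ z in Metric.closedBall y s, exp (W k₀ z) := hmass
    _ ≤ ∫ z in Metric.closedBall p 1, exp (W k₀ z) :=
        setIntegral_mono_set ((hcont k₀).continuousOn.integrableOn_compact
          (isCompact_closedBall _ _)) (.of_forall fun z => (exp_pos _).le)
          (hball.trans hsub).eventuallyLE

end SmallEnergy

/-! ### Functions on the line and on the cylinder -/

section RealLine

variable {N N' : ℝ → ℝ} {C L δ : ℝ}

theorem eq_zero_of_tendsto_hasDerivAt_atBot (hN : ∀ t, HasDerivAt N (N' t) t)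
    (hL : Tendsto N' atBot (𝓝 L)) (hC : ∀ t ≤ 0, |N t| ≤ C) : L = 0 := by
  have hslope (R : ℝ) (hR : 0 < R) : ∃ᶠ t in atBot, |N' t| ≤ 2 * C / R := by
    refine frequently_atBot.2 fun a => ?_
    obtain ⟨ξ, hξ, hξN⟩ := exists_hasDerivAt_eq_slope N N' (sub_lt_self (min a 0) hR)
      (fun t _ => (hN t).continuousAt.continuousWithinAt) (fun t _ => hN t)
    refine ⟨ξ, hξ.2.le.trans (min_le_left _ _), ?_⟩
    rw [hξN, sub_sub_cancel, abs_div, abs_of_pos hR]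
    have hdiff := abs_sub (N (min a 0)) (N (min a 0 - R))
    have hright := hC (min a 0) (min_le_right _ _)
    have hleft := hC (min a 0 - R) ((sub_lt_self _ hR).le.trans (min_le_right _ _))
    gcongr
    linarith
  have hbound : ∀ᶠ R in atTop, |L| ≤ 2 * C / R := by
    filter_upwards [eventually_gt_atTop 0] with R hR
    exact le_of_tendsto_of_frequently hL.abs (hslope R hR)
  exact abs_nonpos_iff.1 (ge_of_tendsto (tendsto_const_nhds.div_atTop tendsto_id) hbound)

theorem isBigO_integral_Ioi_exp {f : ℝ → ℝ} (hδ : 0 < δ)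
    (hf : f =O[atTop] fun t => exp (-δ * t)) :
    (fun t => ∫ s in Ioi t, f s) =O[atTop] fun t => exp (-δ * t) := by
  obtain ⟨C, hC⟩ := hf.bound
  obtain ⟨T, hT⟩ := eventually_atTop.1 hC
  refine .of_bound (C / δ) (eventually_atTop.2 ⟨T, fun t ht => ?_⟩)
  have hle (s : ℝ) (hs : s ∈ Ioi t) : ‖f s‖ ≤ C * exp (-δ * s) := by
    simpa only [norm_eq_abs, abs_exp] using hT s (ht.trans (le_of_lt hs))
  calc ‖∫ s in Ioi t, f s‖ ≤ ∫ s in Ioi t, C * exp (-δ * s) :=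
        norm_integral_le_of_norm_le ((integrableOn_exp_mul_Ioi (neg_lt_zero.2 hδ) t).const_mul C)
          (ae_restrict_of_forall_mem measurableSet_Ioi hle)
    _ = C / δ * ‖exp (-δ * t)‖ := by
        rw [integral_const_mul, integral_exp_mul_Ioi (neg_lt_zero.2 hδ), neg_div_neg_eq,
          norm_eq_abs, abs_exp]
        ring

theorem exists_sub_isBigO_exp (hδ : 0 < δ) (hN : ∀ t, HasDerivAt N (N' t) t)
    (hcont : Continuous N') (hN' : N' =O[atTop] fun t => exp (-δ * t)) :
    ∃ L, (fun t => N t - L) =O[atTop] fun t => exp (-δ * t) := by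
  have hint (t : ℝ) : IntegrableOn N' (Ioi t) :=
    integrable_of_isBigO_exp_neg hδ hcont.continuousOn hN'
  have hlim := tendsto_limUnder_of_hasDerivAt_of_integrableOn_Ioi (fun t _ => hN t) (hint 0)
  refine ⟨limUnder atTop N, (isBigO_integral_Ioi_exp hδ hN').neg_left.congr_left fun t => ?_⟩
  rw [integral_Ioi_of_hasDerivAt_of_tendsto' (fun s _ => hN s) (hint t) hlim, neg_sub]

end RealLine

section Periodic

variable {w : ℝ × ℝ → ℝ} {t θ ε : ℝ}

theorem angularIntegral_eq_integral (hper : ∀ t θ, w (t, θ + 2 * π) = w (t, θ)) (t θ : ℝ) :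
    angularIntegral w t = ∫ φ in θ..(θ + 2 * π), w (t, φ) := by
  have hp : Function.Periodic (fun φ => w (t, φ)) (2 * π) := fun φ => hper t φ
  rw [← hp.intervalIntegral_add_eq (-π) θ, angularIntegral]
  ring_nf

theorem setIntegral_closedBall_le_integral_angularIntegral (hw : Continuous w)
    (hper : ∀ t θ, w (t, θ + 2 * π) = w (t, θ)) (hpos : ∀ s φ, t - 1 ≤ s → 0 ≤ w (s, φ)) :
    ∫ z in Metric.closedBall (t, θ) 1, w z ≤ ∫ s in (t - 1)..(t + 1), angularIntegral w s := by
  have hsquare : IntegrableOn w (Icc (t - 1) (t + 1) ×ˢ Icc (θ - 1) (θ + 1)) :=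
    hw.continuousOn.integrableOn_compact (isCompact_Icc.prod isCompact_Icc)
  rw [← closedBall_prod_same, Real.closedBall_eq_Icc, Real.closedBall_eq_Icc,
    Measure.volume_eq_prod, setIntegral_prod _ hsquare,
    intervalIntegral.integral_of_le (by linarith), integral_Icc_eq_integral_Ioc]
  have hcircle (s : ℝ) (hs : s ∈ Ioc (t - 1) (t + 1)) :
      ∫ φ in Icc (θ - 1) (θ + 1), w (s, φ) ≤ angularIntegral w s := by
    rw [angularIntegral_eq_integral hper s (θ - 1), integral_Icc_eq_integral_Ioc,
      ← intervalIntegral.integral_of_le (by linarith)]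
    exact intervalIntegral.integral_mono_interval le_rfl (by linarith)
      (by linarith [pi_gt_three]) (.of_forall fun φ => hpos s φ hs.1.le)
      ((by fun_prop : Continuous fun φ => w (s, φ)).intervalIntegrable _ _)
  refine setIntegral_mono_on ?_ (continuous_angularIntegral hw).integrableOn_Ioc
    measurableSet_Ioc hcircle
  have : Continuous fun s => ∫ φ in (θ - 1)..(θ + 1), w (s, φ) :=
    intervalIntegral.continuous_parametric_intervalIntegral_of_continuous' (by fun_prop) _ _
  refine this.integrableOn_Ioc.congr_fun (fun s _ => ?_) measurableSet_Ioc
  simp only [integral_Icc_eq_integral_Ioc, intervalIntegral.integral_of_le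
    (show θ - 1 ≤ θ + 1 by linarith)]

theorem abs_two_pi_mul_sub_angularIntegral_le (hw : Continuous w)
    (hper : ∀ t θ, w (t, θ + 2 * π) = w (t, θ))
    (hosc : ∀ φ, |θ - φ| ≤ 2 * π → |w (t, θ) - w (t, φ)| ≤ ε) :
    |2 * π * w (t, θ) - angularIntegral w t| ≤ 2 * π * ε := by
  have hdiff : 2 * π * w (t, θ) - angularIntegral w t
      = ∫ φ in θ..(θ + 2 * π), (w (t, θ) - w (t, φ)) := by
    rw [intervalIntegral.integral_sub intervalIntegrable_const
      ((by fun_prop : Continuous fun φ => w (t, φ)).intervalIntegrable _ _),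
      intervalIntegral.integral_const, smul_eq_mul, ← angularIntegral_eq_integral hper]
    ring
  have hle (φ : ℝ) (hφ : φ ∈ uIoc θ (θ + 2 * π)) : ‖w (t, θ) - w (t, φ)‖ ≤ ε := by
    rw [uIoc_of_le (by linarith [pi_pos])] at hφ
    exact hosc φ (abs_le.2 ⟨by linarith [hφ.2], by linarith [hφ.1, pi_pos]⟩)
  rw [hdiff, mul_comm _ ε]
  simpa [abs_of_pos pi_pos] using intervalIntegral.norm_integral_le_of_norm_le_const hle

theorem pi_mul_le_two_mul_of_angularIntegral_le {B : ℝ} (hw : ContDiff ℝ 2 w)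
    (hper : ∀ t θ, w (t, θ + 2 * π) = w (t, θ)) (hpos : ∀ s φ, t - 1 ≤ s → 0 ≤ w (s, φ))
    (hlap : ∀ z, 0 ≤ lap w z) (hB : ∀ s ∈ Icc (t - 1) (t + 1), angularIntegral w s ≤ B) :
    π * w (t, θ) ≤ 2 * B := by
  have hle : t - 1 ≤ t + 1 := by linarith
  have hball (z : ℝ × ℝ) (hz : z ∈ Metric.closedBall (t, θ) 1) : 0 ≤ w z := by
    have hfst : |z.1 - t| ≤ 1 := (le_max_left _ _).trans (Metric.mem_closedBall.1 hz)
    exact hpos z.1 z.2 (by linarith [(abs_le.1 hfst).1])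
  calc π * w (t, θ) = π * 1 ^ 2 * w (t, θ) := by ring
    _ ≤ ∫ z in Metric.closedBall (t, θ) 1, w z :=
        pi_mul_sq_mul_le_setIntegral_closedBall hw one_pos hball fun z _ => hlap z
    _ ≤ ∫ s in (t - 1)..(t + 1), angularIntegral w s :=
        setIntegral_closedBall_le_integral_angularIntegral hw.continuous hper hpos
    _ ≤ ∫ _ in (t - 1)..(t + 1), B :=
        intervalIntegral.integral_mono_on hle
          ((continuous_angularIntegral hw.continuous).intervalIntegrable _ _)
          intervalIntegrable_const hB
    _ = 2 * B := by
        rw [intervalIntegral.integral_const, smul_eq_mul]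
        ring

end Periodic

section CylinderEnd

/-- The end `t → +∞` of the cylinder with coordinates `(t, θ)`, as a filter; an estimate along it
is uniform in the angle `θ`. -/
def cylinderEnd : Filter (ℝ × ℝ) := comap Prod.fst atTop

variable {w : ℝ × ℝ → ℝ} {δ : ℝ}

theorem eventually_cylinderEnd_iff {p : ℝ × ℝ → Prop} :
    (∀ᶠ z in cylinderEnd, p z) ↔ ∃ T, ∀ t θ, T ≤ t → p (t, θ) := by
  simp only [(atTop_basis.comap Prod.fst).eventually_iff, cylinderEnd, mem_preimage, mem_Ici,
    Prod.forall, true_and]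

theorem tendsto_fst_cylinderEnd : Tendsto Prod.fst cylinderEnd atTop := tendsto_comap

theorem isBigO_exp_of_le {κ : ℝ} (hle : δ ≤ κ) :
    (fun z : ℝ × ℝ => exp (-κ * z.1)) =O[cylinderEnd] fun z => exp (-δ * z.1) := by
  refine .of_norm_eventuallyLE ?_
  filter_upwards [tendsto_fst_cylinderEnd.eventually (eventually_ge_atTop 0)] with z hz
  simp only [norm_eq_abs, abs_exp]
  gcongr

theorem isBigO_angularIntegral (hdecay : w =O[cylinderEnd] fun z => exp (-δ * z.1)) :
    angularIntegral w =O[atTop] fun t => exp (-δ * t) := by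
  obtain ⟨C, hC⟩ := hdecay.bound
  obtain ⟨T, hT⟩ := eventually_cylinderEnd_iff.1 hC
  refine .of_bound (2 * π * C) (eventually_atTop.2 ⟨T, fun t ht => ?_⟩)
  rw [mul_assoc]
  exact abs_angularIntegral_le fun θ => hT t θ ht

theorem isBigO_two_pi_mul_sub_angularIntegral (hw : ContDiff ℝ 2 w)
    (hper : ∀ t θ, w (t, θ + 2 * π) = w (t, θ)) (hδ₀ : 0 ≤ δ) (hδ : δ ≤ 1 / 2)
    (hlap : lap w =O[cylinderEnd] fun z => exp (-δ * z.1))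
    (hgrowth : w =O[cylinderEnd] fun z => 1 + |z.1|) :
    (fun z => 2 * π * w z - angularIntegral w z.1) =O[cylinderEnd]
      fun z => exp (-δ * z.1) := by
  obtain ⟨F, hF⟩ := hlap.bound
  obtain ⟨C, hC⟩ := hgrowth.bound
  obtain ⟨T, hT⟩ := eventually_cylinderEnd_iff.1 (hF.and hC)
  have habs (r : ℝ) : abs (1 + |r|) = 1 + |r| := abs_of_nonneg (by positivity)
  simp only [norm_eq_abs, abs_exp, habs] at hT
  obtain ⟨K, hK⟩ := exists_abs_sub_le_mul_exp hw hper hδ₀ hδ (fun t θ ht => (hT t θ ht).1)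
    (fun t θ ht => (hT t θ ht).2)
  refine .of_bound (2 * π * K) (eventually_cylinderEnd_iff.2 ⟨T, fun t θ ht => ?_⟩)
  rw [norm_eq_abs, norm_eq_abs, abs_exp, mul_assoc _ K]
  exact abs_two_pi_mul_sub_angularIntegral_le hw.continuous hper fun φ hφ => hK t θ φ ht hφ

theorem isBigO_fderiv_exp (hw : ContDiff ℝ 2 w) (hδ : 0 ≤ δ)
    (hdecay : w =O[cylinderEnd] fun z => exp (-δ * z.1))
    (hlap : lap w =O[cylinderEnd] fun z => exp (-δ * z.1)) :
    ((fun z => fderiv ℝ w z (1, 0)) =O[cylinderEnd] fun z => exp (-δ * z.1)) ∧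
      (fun z => fderiv ℝ w z (0, 1)) =O[cylinderEnd] fun z => exp (-δ * z.1) := by
  obtain ⟨C, hCpos, hC⟩ := hdecay.exists_pos
  obtain ⟨F, hF⟩ := hlap.bound
  obtain ⟨T, hT⟩ := eventually_cylinderEnd_iff.1 (hC.bound.and hF)
  simp only [norm_eq_abs, abs_exp] at hT
  have hball (t θ : ℝ) (ht : T + 1 ≤ t) (z : ℝ × ℝ) (hz : z ∈ Metric.closedBall (t, θ) 1) :
      |w z| ≤ max C F * exp δ * exp (-δ * t) ∧ |lap w z| ≤ max C F * exp δ * exp (-δ * t) := by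
    have hfst : |z.1 - t| ≤ 1 := (le_max_left _ _).trans (Metric.mem_closedBall.1 hz)
    have hge : t - 1 ≤ z.1 := by linarith [(abs_le.1 hfst).1]
    have hexp : exp (-δ * z.1) ≤ exp δ * exp (-δ * t) := by
      rw [← exp_add, exp_le_exp]
      nlinarith
    rw [mul_assoc]
    obtain ⟨hval, hlapz⟩ := hT z.1 z.2 (by linarith)
    exact ⟨hval.trans (by gcongr; exact le_max_left _ _),
      hlapz.trans (by gcongr; exact le_max_right _ _)⟩
  have hpos (t : ℝ) : 0 < max C F * exp δ * exp (-δ * t) := by positivity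
  have hdiff (z : ℝ × ℝ) : DifferentiableAt ℝ w z := hw.differentiable two_ne_zero z
  constructor <;>
    refine .of_bound (3 * (max C F * exp δ))
      (eventually_cylinderEnd_iff.2 ⟨T + 1, fun t θ ht => ?_⟩) <;>
    rw [norm_eq_abs, norm_eq_abs, abs_exp, mul_assoc 3]
  · rw [← deriv_fst_eq_fderiv (hdiff (t, θ))]
    exact abs_deriv_fst_le hw (hpos t) (fun z hz => (hball t θ ht z hz).1)
      fun z hz => (hball t θ ht z hz).2
  · rw [← deriv_snd_eq_fderiv (hdiff (t, θ))]
    exact abs_deriv_snd_le hw (hpos t) (fun z hz => (hball t θ ht z hz).1)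
      fun z hz => (hball t θ ht z hz).2

theorem exists_abs_le_mul_exp_of_isBigO (hw : Continuous w)
    (hdecay : w =O[cylinderEnd] fun z => exp (-δ * z.1)) :
    ∃ C, ∀ t, 0 ≤ t → ∀ θ ∈ Icc (-π) π, |w (t, θ)| ≤ C * exp (-δ * t) := by
  obtain ⟨C₁, hC₁⟩ := hdecay.bound
  obtain ⟨T, hT⟩ := eventually_cylinderEnd_iff.1 hC₁
  obtain ⟨C₀, hC₀⟩ := (isCompact_Icc.prod isCompact_Icc).exists_bound_of_continuousOn
    (s := Icc 0 T ×ˢ Icc (-π) π) (f := fun z => w z * exp (δ * z.1)) (by fun_prop)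
  refine ⟨max C₀ C₁, fun t ht θ hθ => ?_⟩
  rcases le_total t T with htT | hTt
  · have hbound := hC₀ (t, θ) ⟨⟨ht, htT⟩, hθ⟩
    rw [norm_mul, norm_eq_abs, norm_eq_abs, abs_exp] at hbound
    calc |w (t, θ)| = |w (t, θ)| * exp (δ * t) * exp (-δ * t) := by
          rw [mul_assoc, ← exp_add, neg_mul, add_neg_cancel, exp_zero, mul_one]
      _ ≤ max C₀ C₁ * exp (-δ * t) := by
          gcongr
          exact hbound.trans (le_max_left _ _)
  · have hbound := hT t θ hTt
    rw [norm_eq_abs, norm_eq_abs, abs_exp] at hbound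
    exact hbound.trans (by gcongr; exact le_max_right _ _)

end CylinderEnd

/-! ### The Liouville system on the cylinder -/

/-- The Liouville system on the cylinder with coordinates `(t, θ)`, with nonnegative coefficients.
It comes from the system on the plane by passing to log-polar coordinates: the unknowns are
`2π`-periodic in `θ`, have finite energy, and `W j` grows like `b j * t` at the end `t → -∞`. -/
structure CylinderSolution {ι : Type*} [Fintype ι] (A : Matrix ι ι ℝ) (b : ι → ℝ)
    (W : ι → ℝ × ℝ → ℝ) : Prop where
  contDiff : ∀ j, ContDiff ℝ 2 (W j)
  periodic : ∀ j t θ, W j (t, θ + 2 * π) = W j (t, θ)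
  nonneg : ∀ j k, 0 ≤ A j k
  lap_eq : ∀ j z, lap (W j) z = -∑ k, A j k * exp (W k z)
  integrable : ∀ k, Integrable (angularIntegral fun z => exp (W k z))
  bounded : ∀ j, ∃ C, ∀ t ≤ 0, ∀ θ, |W j (t, θ) - b j * t| ≤ C

namespace CylinderSolution

variable {ι : Type*} [Fintype ι] {A : Matrix ι ι ℝ} {b : ι → ℝ} {W : ι → ℝ × ℝ → ℝ} {δ : ℝ}

/-- The nonlinearity of the `j`-th equation, so that the system reads
`lap (W j) = -source A W j`. -/
noncomputable def source (A : Matrix ι ι ℝ) (W : ι → ℝ × ℝ → ℝ) (j : ι) (z : ℝ × ℝ) : ℝ :=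
  ∑ k, A j k * exp (W k z)

/-- The slope of `W j` at the end `t → +∞`: the initial slope `b j` diminished by the total
source, per unit of angle. -/
noncomputable def outerSlope (A : Matrix ι ι ℝ) (b : ι → ℝ) (W : ι → ℝ × ℝ → ℝ) (j : ι) : ℝ :=
  b j - (∑ k, A j k * ∫ t, angularIntegral (fun z => exp (W k z)) t) / (2 * π)

theorem lap_eq_neg_source (h : CylinderSolution A b W) (j : ι) : lap (W j) = -source A W j :=
  funext (h.lap_eq j)

theorem continuous (h : CylinderSolution A b W) (j : ι) : Continuous (W j) :=
  (h.contDiff j).continuous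

theorem continuous_source (h : CylinderSolution A b W) (j : ι) : Continuous (source A W j) :=
  continuous_finsetSum _ fun k _ => continuous_const.mul (h.continuous k).rexp

theorem source_nonneg (h : CylinderSolution A b W) (j : ι) : 0 ≤ source A W j := fun _ =>
  Finset.sum_nonneg fun k _ => mul_nonneg (h.nonneg j k) (exp_pos _).le

theorem angularIntegral_source (h : CylinderSolution A b W) (j : ι) :
    angularIntegral (source A W j)
      = fun t => ∑ k, A j k * angularIntegral (fun z => exp (W k z)) t := by
  funext t
  have hint (k : ι) : IntervalIntegrable (fun θ => A j k * exp (W k (t, θ))) volume (-π) π :=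
    intervalIntegrable_angle (continuous_const.mul (h.continuous k).rexp) t
  simp only [angularIntegral, source, intervalIntegral.integral_finsetSum fun k _ => hint k,
    intervalIntegral.integral_const_mul]

theorem integrable_angularIntegral_source (h : CylinderSolution A b W) (j : ι) :
    Integrable (angularIntegral (source A W j)) := by
  rw [h.angularIntegral_source]
  exact integrable_finsetSum _ fun k _ => (h.integrable k).const_mul _

theorem two_pi_mul_outerSlope (h : CylinderSolution A b W) (j : ι) :
    2 * π * outerSlope A b W j = 2 * π * b j - ∫ t, angularIntegral (source A W j) t := by
  rw [h.angularIntegral_source, integral_finsetSum _ fun k _ => (h.integrable k).const_mul _]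
  simp only [integral_const_mul, outerSlope]
  field_simp

theorem integral_Ioi_source_nonneg (h : CylinderSolution A b W) (j : ι) (t : ℝ) :
    0 ≤ ∫ s in Ioi t, angularIntegral (source A W j) s :=
  integral_nonneg (angularIntegral_nonneg (h.source_nonneg j))

-- The angular mean of `lap (W j)` is the second derivative of the angular mean of `W j`, so that
-- the first one is a tail of the source up to a constant, which the end `t → -∞` determines.
theorem hasDerivAt_angularIntegral (h : CylinderSolution A b W) (j : ι) (t : ℝ) :
    HasDerivAt (angularIntegral (W j))
      (2 * π * outerSlope A b W j + ∫ s in Ioi t, angularIntegral (source A W j) s) t := by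
  set g := angularIntegral (source A W j)
  set M' := angularIntegral fun z => fderiv ℝ (W j) z (1, 0)
  have hint : Integrable g := h.integrable_angularIntegral_source j
  have hcont : Continuous g := continuous_angularIntegral (h.continuous_source j)
  have hM (s : ℝ) : HasDerivAt (angularIntegral (W j)) (M' s) s :=
    _root_.hasDerivAt_angularIntegral ((h.contDiff j).of_le one_le_two) s
  have hM' (s : ℝ) : HasDerivAt M' (-g s) s := by
    refine (hasDerivAt_angularIntegral_fderiv (h.contDiff j) (h.periodic j) s).congr_deriv ?_
    rw [h.lap_eq_neg_source]
    exact intervalIntegral.integral_neg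
  have hIic (s : ℝ) : M' s = M' t + (∫ r in Iic t, g r) - ∫ r in Iic s, g r := by
    have hFTC := intervalIntegral.integral_eq_sub_of_hasDerivAt (a := s) (b := t)
      (fun r _ => hM' r) (hcont.neg.intervalIntegrable _ _)
    rw [intervalIntegral.integral_neg,
      ← intervalIntegral.integral_Iic_sub_Iic hint.integrableOn hint.integrableOn] at hFTC
    linarith
  have hlim : Tendsto M' atBot (𝓝 (M' t + ∫ r in Iic t, g r)) := by
    rw [funext hIic]
    simpa using (tendsto_integral_Iic_zero tendsto_id).const_sub (M' t + ∫ r in Iic t, g r)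
  obtain ⟨C, hC⟩ := h.bounded j
  have hzero : 2 * π * b j - (M' t + ∫ r in Iic t, g r) = 0 := by
    refine eq_zero_of_tendsto_hasDerivAt_atBot (C := 2 * π * C)
      (fun s => ((hasDerivAt_const_mul (b j)).const_mul (2 * π)).sub (hM s)) (hlim.const_sub _)
      fun s hs => ?_
    rw [Pi.sub_apply, ← angularIntegral_fst_sub (b j * ·) (h.continuous j)]
    exact abs_angularIntegral_le fun θ => (abs_sub_comm _ _).trans_le (hC s hs θ)
  refine (hM t).congr_deriv ?_
  rw [h.two_pi_mul_outerSlope,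
    ← intervalIntegral.integral_Iic_add_Ioi (b := t) hint.integrableOn hint.integrableOn]
  linarith

theorem hasDerivAt_angularIntegral_sub (h : CylinderSolution A b W) (j : ι) (a t : ℝ) :
    HasDerivAt (fun t => angularIntegral (W j) t - 2 * π * (outerSlope A b W j + a) * t)
      ((∫ s in Ioi t, angularIntegral (source A W j) s) - 2 * π * a) t :=
  ((h.hasDerivAt_angularIntegral j t).sub (hasDerivAt_const_mul _)).congr_deriv (by ring)

theorem monotone_angularIntegral_sub (h : CylinderSolution A b W) (j : ι) :
    Monotone fun t => angularIntegral (W j) t - 2 * π * outerSlope A b W j * t :=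
  monotone_of_hasDerivAt_nonneg
    (fun t => by simpa using h.hasDerivAt_angularIntegral_sub j 0 t)
    (h.integral_Ioi_source_nonneg j)

-- Were the slope nonnegative, the mean of `W j` would be nondecreasing and, by Jensen, the
-- energy of `W j` would be infinite.
theorem outerSlope_neg (h : CylinderSolution A b W) (j : ι) : outerSlope A b W j < 0 := by
  by_contra! hslope
  set m := angularIntegral (W j) 0 / (2 * π) with hm
  have hlow (t : ℝ) (ht : t ∈ Ioi 0) :
      2 * π * exp m ≤ angularIntegral (fun z => exp (W j z)) t := by
    refine two_pi_mul_exp_le_angularIntegral_exp (h.continuous j) ?_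
    have hmono := h.monotone_angularIntegral_sub j (mem_Ioi.1 ht).le
    have : 0 ≤ 2 * π * outerSlope A b W j * t := by
      have := (mem_Ioi.1 ht).le
      positivity
    rw [hm, mul_div_cancel₀ _ two_pi_pos.ne']
    linarith
  have hconst : IntegrableOn (fun _ : ℝ => 2 * π * exp m) (Ioi 0) := by
    refine (h.integrable j).integrableOn.mono' aestronglyMeasurable_const ?_
    refine ae_restrict_of_forall_mem measurableSet_Ioi fun t ht => ?_
    rw [norm_of_nonneg (by positivity)]
    exact hlow t ht
  rw [integrableOn_const_iff enorm_ne_top, volume_Ioi] at hconst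
  exact hconst.elim (enorm_ne_zero.2 (by positivity)) (lt_irrefl _)

theorem isBigO_exp_one (h : CylinderSolution A b W) (j : ι) :
    (fun z => exp (W j z)) =O[cylinderEnd] fun _ => (1 : ℝ) := by
  have hrow (i : ι) : 0 ≤ ∑ k, A i k := Finset.sum_nonneg fun k _ => h.nonneg i k
  set a := 1 + ∑ i, ∑ k, A i k
  have hapos : 0 < a := add_pos_of_pos_of_nonneg one_pos (Finset.sum_nonneg fun i _ => hrow i)
  have hle (i : ι) : ∑ k, A i k ≤ a :=
    (Finset.single_le_sum (fun i _ => hrow i) (Finset.mem_univ i)).trans (by linarith)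
  have htail (k : ι) :
      ∀ᶠ T in atTop, ∫ t in Ioi T, angularIntegral (fun z => exp (W k z)) t < π / (exp 1 * a) :=
    (tendsto_integral_Ioi_zero tendsto_id).eventually_lt_const (by positivity)
  obtain ⟨T, hT⟩ := eventually_atTop.1 (eventually_all.2 htail)
  refine .of_bound (4 / a) (eventually_cylinderEnd_iff.2 ⟨T + 1, fun t θ ht => ?_⟩)
  rw [norm_eq_abs, abs_exp, norm_one, mul_one]
  refine exp_le_of_setIntegral_closedBall_lt h.nonneg hapos hle h.contDiff
    (fun i z _ => (h.lap_eq i z).ge) (fun k => ?_) j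
  have hnonneg : 0 ≤ angularIntegral fun z => exp (W k z) :=
    angularIntegral_nonneg fun z => (exp_pos _).le
  calc ∫ z in Metric.closedBall (t, θ) 1, exp (W k z)
    _ ≤ ∫ s in (t - 1)..(t + 1), angularIntegral (fun z => exp (W k z)) s :=
        setIntegral_closedBall_le_integral_angularIntegral (h.continuous k).rexp
          (fun t θ => by rw [h.periodic]) fun _ _ _ => (exp_pos _).le
    _ ≤ ∫ s in Ioi (t - 1), angularIntegral (fun z => exp (W k z)) s := by
        rw [intervalIntegral.integral_of_le (by linarith)]
        exact setIntegral_mono_set (h.integrable k).integrableOn (.of_forall hnonneg)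
          Ioc_subset_Ioi_self.eventuallyLE
    _ < π / (exp 1 * a) := hT (t - 1) (by linarith) k

theorem isBigO_source {l : Filter (ℝ × ℝ)} {g : ℝ × ℝ → ℝ}
    (h : ∀ k, (fun z => exp (W k z)) =O[l] g) (j : ι) : source A W j =O[l] g :=
  .fun_sum fun k _ => (h k).const_mul_left (A j k)

theorem exists_le (h : CylinderSolution A b W) (j : ι) :
    ∃ C > 0, ∃ T, ∀ t θ, T ≤ t → W j (t, θ) ≤ C := by
  obtain ⟨C, hC, hexp⟩ := (h.isBigO_exp_one j).exists_pos
  obtain ⟨T, hT⟩ := eventually_cylinderEnd_iff.1 hexp.bound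
  refine ⟨C, hC, T, fun t θ ht => (lt_add_one _).le.trans ((add_one_le_exp _).trans ?_)⟩
  simpa using hT t θ ht

-- `C - W j` is subharmonic and, far out, nonnegative; its mean grows at most linearly.
theorem isBigO_one_add_abs (h : CylinderSolution A b W) (j : ι) :
    W j =O[cylinderEnd] fun z => 1 + |z.1| := by
  obtain ⟨C, hC, T, hle⟩ := h.exists_le j
  set m := |angularIntegral (W j) 0|
  set a := -(2 * π * outerSlope A b W j)
  have hapos : 0 ≤ a := by nlinarith [h.outerSlope_neg j, pi_pos]
  have hmean (s : ℝ) (hs : 0 ≤ s) :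
      angularIntegral (fun z => C - W j z) s ≤ 2 * π * C + m + a * s := by
    have hmono := h.monotone_angularIntegral_sub j hs
    have := neg_abs_le (angularIntegral (W j) 0)
    rw [angularIntegral_fst_sub (fun _ => C) (h.continuous j)]
    linarith
  have hlap (z : ℝ × ℝ) : 0 ≤ lap (fun z => C - W j z) z := by
    rw [lap_sub contDiffAt_const (h.contDiff j).contDiffAt, h.lap_eq_neg_source]
    simpa [lap] using h.source_nonneg j z
  refine .of_bound (3 * C + 2 * (m + a))
    (eventually_cylinderEnd_iff.2 ⟨max T 0 + 1, fun t θ ht => ?_⟩)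
  have hTt : T + 1 ≤ t := (add_le_add_left (le_max_left T 0) 1).trans ht
  have ht1 : 1 ≤ t := (le_add_of_nonneg_left (le_max_right T 0)).trans ht
  have hlow : π * (C - W j (t, θ)) ≤ 2 * (2 * π * C + m + a * (t + 1)) :=
    pi_mul_le_two_mul_of_angularIntegral_le (contDiff_const.sub (h.contDiff j))
      (fun t θ => by rw [h.periodic]) (fun s φ hs => sub_nonneg.2 (hle s φ (by linarith))) hlap
      fun s hs => (hmean s (by linarith [hs.1])).trans (by gcongr; exact hs.2)
  have hm : 0 ≤ (m + a) * (1 + t) := by positivity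
  have hmt : 0 ≤ m * t := by positivity
  have hCt : 0 ≤ C * t := by positivity
  rw [norm_eq_abs, norm_eq_abs, abs_of_nonneg (a := 1 + |t|) (by positivity),
    abs_of_nonneg (a := t) (by linarith), abs_le]
  constructor
  · refine neg_le.1 (le_of_mul_le_mul_left ?_ pi_pos)
    nlinarith [pi_gt_three]
  · linarith [hle t θ (by linarith)]

-- The mean of `W j` decreases linearly, since its slope tends to a negative number, and `W j`
-- stays at bounded distance of its mean.
theorem exists_isBigO_exp (h : CylinderSolution A b W) (j : ι) :
    ∃ κ > 0, (fun z => exp (W j z)) =O[cylinderEnd] fun z => exp (-κ * z.1) := by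
  set κ := -(outerSlope A b W j) / 2 with hκ
  have hκpos : 0 < κ := by linarith [h.outerSlope_neg j]
  have htail : ∀ᶠ t in atTop, ∫ s in Ioi t, angularIntegral (source A W j) s ≤ 2 * π * κ :=
    (tendsto_integral_Ioi_zero tendsto_id).eventually_le_const (by positivity)
  obtain ⟨T₀, hT₀⟩ := eventually_atTop.1 htail
  have hosc := isBigO_two_pi_mul_sub_angularIntegral (h.contDiff j) (h.periodic j) le_rfl
    (by norm_num) (by simpa [h.lap_eq_neg_source] using isBigO_source (A := A) h.isBigO_exp_one j)
    (h.isBigO_one_add_abs j)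
  obtain ⟨K, hK⟩ := hosc.bound
  obtain ⟨T₁, hT₁⟩ := eventually_cylinderEnd_iff.1 hK
  have hderiv := h.hasDerivAt_angularIntegral_sub j κ
  set N := fun t => angularIntegral (W j) t - 2 * π * (outerSlope A b W j + κ) * t with hN
  have hanti : AntitoneOn N (Ici T₀) := by
    refine antitoneOn_of_deriv_nonpos (convex_Ici T₀)
      (fun t _ => (hderiv t).continuousAt.continuousWithinAt)
      (fun t _ => (hderiv t).differentiableAt.differentiableWithinAt) fun t ht => ?_
    rw [(hderiv t).deriv]
    exact sub_nonpos.2 (hT₀ t (interior_subset ht))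
  refine ⟨κ, hκpos, .of_bound (exp ((K + N T₀) / (2 * π)))
    (eventually_cylinderEnd_iff.2 ⟨max T₀ T₁, fun t θ ht => ?_⟩)⟩
  rw [norm_eq_abs, norm_eq_abs, abs_exp, abs_exp, ← exp_add, exp_le_exp]
  have hNt : N t ≤ N T₀ :=
    hanti self_mem_Ici ((le_max_left _ _).trans ht) ((le_max_left _ _).trans ht)
  have hWt := hT₁ t θ ((le_max_right _ _).trans ht)
  simp only [neg_zero, zero_mul, exp_zero, norm_one, mul_one, norm_eq_abs] at hWt
  have hslope : outerSlope A b W j + κ = -κ := by rw [hκ]; ring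
  simp only [hN, hslope] at hNt ⊢
  rw [← sub_le_iff_le_add, le_div_iff₀ two_pi_pos]
  linarith [(abs_le.1 hWt).2]

theorem exists_forall_isBigO_exp (h : CylinderSolution A b W) :
    ∃ δ > 0, δ ≤ 1 / 2 ∧ ∀ j, (fun z => exp (W j z)) =O[cylinderEnd] fun z => exp (-δ * z.1) := by
  choose κ hκ hexp using h.exists_isBigO_exp
  cases isEmpty_or_nonempty ι
  · exact ⟨1 / 2, by norm_num, le_rfl, isEmptyElim⟩
  · obtain ⟨i, hi⟩ := Finite.exists_min κ
    exact ⟨min (κ i) (1 / 2), lt_min (hκ i) (by norm_num), min_le_right _ _, fun j =>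
      (hexp j).trans (isBigO_exp_of_le ((min_le_left _ _).trans (hi j)))⟩

theorem isBigO_lap (h : CylinderSolution A b W)
    (hexp : ∀ k, (fun z => exp (W k z)) =O[cylinderEnd] fun z => exp (-δ * z.1)) (j : ι) :
    lap (W j) =O[cylinderEnd] fun z => exp (-δ * z.1) :=
  h.lap_eq_neg_source j ▸ (isBigO_source hexp j).neg_left

theorem exists_isBigO_angularIntegral_sub (h : CylinderSolution A b W) (hδ : 0 < δ)
    (hexp : ∀ k, (fun z => exp (W k z)) =O[cylinderEnd] fun z => exp (-δ * z.1)) (j : ι) :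
    ∃ L, (fun t => angularIntegral (W j) t - 2 * π * outerSlope A b W j * t - L) =O[atTop]
      fun t => exp (-δ * t) := by
  have hint := h.integrable_angularIntegral_source j
  have hcont : Continuous fun t => ∫ s in Ioi t, angularIntegral (source A W j) s := by
    have htail (t : ℝ) := eq_sub_of_add_eq' (intervalIntegral.integral_interval_add_Ioi
      (a := 0) (b := t) hint.integrableOn hint.integrableOn)
    exact (continuous_const.sub (hint.continuous_primitive 0)).congr fun t => (htail t).symm
  exact exists_sub_isBigO_exp hδ
    (fun t => by simpa using h.hasDerivAt_angularIntegral_sub j 0 t) hcont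
    (isBigO_integral_Ioi_exp hδ (isBigO_angularIntegral (isBigO_source hexp j)))

theorem exists_sub_linear_isBigO_exp (h : CylinderSolution A b W) (hδ : 0 < δ) (hδ' : δ ≤ 1 / 2)
    (hexp : ∀ k, (fun z => exp (W k z)) =O[cylinderEnd] fun z => exp (-δ * z.1)) (j : ι) :
    ∃ c, (fun z => W j z - (outerSlope A b W j * z.1 + c)) =O[cylinderEnd]
      fun z => exp (-δ * z.1) := by
  obtain ⟨L, hL⟩ := h.exists_isBigO_angularIntegral_sub hδ hexp j
  have hosc := isBigO_two_pi_mul_sub_angularIntegral (h.contDiff j) (h.periodic j) hδ.le hδ'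
    (h.isBigO_lap hexp j) (h.isBigO_one_add_abs j)
  refine ⟨L / (2 * π), ((hosc.add (hL.comp_tendsto tendsto_fst_cylinderEnd)).const_mul_left
    (2 * π)⁻¹).congr_left fun z => ?_⟩
  simp only [Function.comp_apply]
  field_simp
  ring

theorem exists_asymptotics (h : CylinderSolution A b W) :
    ∃ δ > 0, ∀ j, ∃ c,
      ((fun z => W j z - (outerSlope A b W j * z.1 + c)) =O[cylinderEnd]
        fun z => exp (-δ * z.1)) ∧
      ((fun z => fderiv ℝ (W j) z (1, 0) - outerSlope A b W j) =O[cylinderEnd]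
        fun z => exp (-δ * z.1)) ∧
      (fun z => fderiv ℝ (W j) z (0, 1)) =O[cylinderEnd] fun z => exp (-δ * z.1) := by
  obtain ⟨δ, hδ, hδ', hexp⟩ := h.exists_forall_isBigO_exp
  refine ⟨δ, hδ, fun j => ?_⟩
  obtain ⟨c, hc⟩ := h.exists_sub_linear_isBigO_exp hδ hδ' hexp j
  set a := outerSlope A b W j
  have haff : ContDiff ℝ 2 fun z : ℝ × ℝ => a * z.1 + c := by fun_prop
  have hlap : lap (fun z => W j z - (a * z.1 + c)) = lap (W j) := by
    funext z
    rw [lap_sub (h.contDiff j).contDiffAt haff.contDiffAt,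
      lap_add_fst_snd (fun t => a * t) (fun _ => c)]
    simp
  have hfderiv (z v : ℝ × ℝ) :
      fderiv ℝ (fun z => W j z - (a * z.1 + c)) z v = fderiv ℝ (W j) z v - a * v.1 := by
    rw [fderiv_fun_sub ((h.contDiff j).differentiable two_ne_zero z)
      (haff.differentiable two_ne_zero z), fderiv_add_const, fderiv_const_mul differentiableAt_fst]
    simp [fderiv_fst]
  have hgrad := isBigO_fderiv_exp ((h.contDiff j).sub haff) hδ.le hc (hlap ▸ h.isBigO_lap hexp j)
  simp only [hfderiv, mul_one, mul_zero, sub_zero] at hgrad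
  exact ⟨c, hc, hgrad⟩

theorem exists_forall_abs_le (h : CylinderSolution A b W) :
    ∃ c : ι → ℝ, ∃ δ > 0, ∃ C, ∀ j, ∀ t, 0 ≤ t → ∀ θ ∈ Icc (-π) π,
      |W j (t, θ) - (outerSlope A b W j * t + c j)| ≤ C * exp (-δ * t) ∧
      |fderiv ℝ (W j) (t, θ) (1, 0) - outerSlope A b W j| ≤ C * exp (-δ * t) ∧
      |fderiv ℝ (W j) (t, θ) (0, 1)| ≤ C * exp (-δ * t) := by
  obtain ⟨δ, hδ, hasymp⟩ := h.exists_asymptotics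
  choose c hval hrad hang using hasymp
  have hcont := h.continuous
  have hfderiv (j : ι) : Continuous (fderiv ℝ (W j)) :=
    (h.contDiff j).continuous_fderiv two_ne_zero
  choose C₁ hC₁ using fun j => exists_abs_le_mul_exp_of_isBigO (by fun_prop) (hval j)
  choose C₂ hC₂ using fun j => exists_abs_le_mul_exp_of_isBigO (by fun_prop) (hrad j)
  choose C₃ hC₃ using fun j => exists_abs_le_mul_exp_of_isBigO (by fun_prop) (hang j)
  obtain ⟨C, hC⟩ := (finite_range fun j => max (C₁ j) (max (C₂ j) (C₃ j))).bddAbove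
  simp only [mem_upperBounds, forall_mem_range, max_le_iff] at hC
  exact ⟨c, δ, hδ, C, fun j t ht θ hθ =>
    ⟨(hC₁ j t ht θ hθ).trans (by gcongr; exact (hC j).1),
      (hC₂ j t ht θ hθ).trans (by gcongr; exact (hC j).2.1),
      (hC₃ j t ht θ hθ).trans (by gcongr; exact (hC j).2.2)⟩⟩

end CylinderSolution

/-! ### From the plane to the cylinder -/

section LogPolarTransform

/-- The function `f` in log-polar coordinates, with the linear term that absorbs the weight
`|x| ^ b` and the Jacobian of the change of variables: see `exp_logPolarTransform`. -/
noncomputable def logPolarTransform (b : ℝ) (f : ℝ × ℝ → ℝ) (z : ℝ × ℝ) : ℝ :=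
  f (logPolar z) + (b + 2) * z.1

variable {b : ℝ} {f : ℝ × ℝ → ℝ}

theorem exp_logPolarTransform (b : ℝ) (f : ℝ × ℝ → ℝ) (z : ℝ × ℝ) :
    exp (logPolarTransform b f z)
      = exp (2 * z.1) * (nrm (logPolar z) ^ b * exp (f (logPolar z))) := by
  rw [nrm_logPolar, ← exp_mul, ← exp_add, ← exp_add, logPolarTransform]
  ring_nf

theorem contDiff_logPolarTransform (hf : ∀ x ≠ 0, ContDiffAt ℝ 2 f x) :
    ContDiff ℝ 2 (logPolarTransform b f) :=
  contDiff_iff_contDiffAt.2 fun z =>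
    ((hf _ (logPolar_ne_zero z)).comp z contDiff_logPolar.contDiffAt).add (by fun_prop)

theorem lap_logPolarTransform (hf : ∀ x ≠ 0, ContDiffAt ℝ 2 f x) (z : ℝ × ℝ) :
    lap (logPolarTransform b f) z = exp (2 * z.1) * lap f (logPolar z) := by
  have hlinear : lap (fun z : ℝ × ℝ => (b + 2) * z.1) z = 0 := by
    simpa using lap_add_fst_snd (fun t => (b + 2) * t) (fun _ => 0) z
  have hdiff : (fun z => f (0 + logPolar z))
      = fun z => logPolarTransform b f z - (b + 2) * z.1 := by
    simp [logPolarTransform]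
  have hlap := lap_comp_logPolar 0 z (by simpa using hf _ (logPolar_ne_zero z))
  rwa [hdiff, lap_sub (contDiff_logPolarTransform hf).contDiffAt (by fun_prop), hlinear, sub_zero,
    zero_add] at hlap

theorem fderiv_logPolarTransform {z : ℝ × ℝ} (hf : DifferentiableAt ℝ f (logPolar z))
    (v : ℝ × ℝ) :
    fderiv ℝ (logPolarTransform b f) z v
      = fderiv ℝ f (logPolar z) (fderivLogPolar z v) + (b + 2) * v.1 := by
  have := (hf.hasFDerivAt.comp z (hasFDerivAt_logPolar z)).add
    ((hasFDerivAt_fst (𝕜 := ℝ) (p := z)).const_mul (b + 2))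
  exact congrArg (fun L : ℝ × ℝ →L[ℝ] ℝ => L v) this.fderiv

theorem fderivLogPolar_apply (z v : ℝ × ℝ) :
    fderivLogPolar z v = exp z.1 •
      (cos z.2 * v.1 - sin z.2 * v.2, sin z.2 * v.1 + cos z.2 * v.2) := by
  rw [fderivLogPolar, Matrix.toLin_finTwoProd_toContinuousLinearMap]
  ext <;> simp <;> ring

theorem fderivLogPolar_cos_neg_sin (z : ℝ × ℝ) :
    fderivLogPolar z (cos z.2, -sin z.2) = exp z.1 • (1, 0) := by
  rw [fderivLogPolar_apply, ← sin_sq_add_cos_sq z.2]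
  ring_nf

theorem fderivLogPolar_sin_cos (z : ℝ × ℝ) :
    fderivLogPolar z (sin z.2, cos z.2) = exp z.1 • (0, 1) := by
  rw [fderivLogPolar_apply, ← sin_sq_add_cos_sq z.2]
  ring_nf

theorem abs_apply_sub_mul_fst_le {L : ℝ × ℝ →L[ℝ] ℝ} {a E : ℝ} (hfst : |L (1, 0) - a| ≤ E)
    (hsnd : |L (0, 1)| ≤ E) (v : ℝ × ℝ) : |L v - a * v.1| ≤ (|v.1| + |v.2|) * E := by
  have hv : L v = v.1 * L (1, 0) + v.2 * L (0, 1) := by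
    rw [← smul_eq_mul, ← smul_eq_mul, ← map_smul, ← map_smul, ← map_add]
    simp
  calc |L v - a * v.1| = |v.1 * (L (1, 0) - a) + v.2 * L (0, 1)| := by
        rw [hv]
        ring_nf
    _ ≤ |v.1| * |L (1, 0) - a| + |v.2| * |L (0, 1)| := by
        rw [← abs_mul, ← abs_mul]
        exact abs_add_le _ _
    _ ≤ |v.1| * E + |v.2| * E := by gcongr
    _ = (|v.1| + |v.2|) * E := by ring

variable {a E : ℝ} {z : ℝ × ℝ}

theorem abs_fderiv_sub_le_of_logPolarTransform (hf : DifferentiableAt ℝ f (logPolar z))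
    (hrad : |fderiv ℝ (logPolarTransform b f) z (1, 0) - a| ≤ E)
    (hang : |fderiv ℝ (logPolarTransform b f) z (0, 1)| ≤ E) {v w : ℝ × ℝ}
    (hvw : fderivLogPolar z v = exp z.1 • w) (hv₁ : |v.1| ≤ 1) (hv₂ : |v.2| ≤ 1) :
    |fderiv ℝ f (logPolar z) w - (a - (b + 2)) * v.1 / exp z.1| ≤ 2 * E / exp z.1 := by
  have hE : 0 ≤ E := (abs_nonneg _).trans hang
  have hv := abs_apply_sub_mul_fst_le hrad hang v
  rw [fderiv_logPolarTransform hf, hvw, map_smul, smul_eq_mul] at hv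
  rw [le_div_iff₀ (exp_pos _)]
  nth_rw 2 [← abs_exp]
  rw [← abs_mul]
  calc |(fderiv ℝ f (logPolar z) w - (a - (b + 2)) * v.1 / exp z.1) * exp z.1|
    _ = |exp z.1 * fderiv ℝ f (logPolar z) w + (b + 2) * v.1 - a * v.1| := by
        congr 1
        field_simp
        ring
    _ ≤ (|v.1| + |v.2|) * E := hv
    _ ≤ 2 * E := by
        gcongr
        linarith

theorem abs_deriv_fst_sub_le_of_logPolarTransform (hf : DifferentiableAt ℝ f (logPolar z))
    (hrad : |fderiv ℝ (logPolarTransform b f) z (1, 0) - a| ≤ E)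
    (hang : |fderiv ℝ (logPolarTransform b f) z (0, 1)| ≤ E) :
    |deriv (fun s => f (s, (logPolar z).2)) (logPolar z).1
      - (a - (b + 2)) * (logPolar z).1 / nrm (logPolar z) ^ 2| ≤ 2 * E / nrm (logPolar z) := by
  have hle := abs_fderiv_sub_le_of_logPolarTransform hf hrad hang (fderivLogPolar_cos_neg_sin z)
    (abs_cos_le_one _) ((abs_neg _).trans_le (abs_sin_le_one _))
  convert hle using 2
  · rw [deriv_fst_eq_fderiv hf, nrm_logPolar, logPolar]
    field_simp
  · rw [nrm_logPolar]

theorem abs_deriv_snd_sub_le_of_logPolarTransform (hf : DifferentiableAt ℝ f (logPolar z))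
    (hrad : |fderiv ℝ (logPolarTransform b f) z (1, 0) - a| ≤ E)
    (hang : |fderiv ℝ (logPolarTransform b f) z (0, 1)| ≤ E) :
    |deriv (fun s => f ((logPolar z).1, s)) (logPolar z).2
      - (a - (b + 2)) * (logPolar z).2 / nrm (logPolar z) ^ 2| ≤ 2 * E / nrm (logPolar z) := by
  have hle := abs_fderiv_sub_le_of_logPolarTransform hf hrad hang (fderivLogPolar_sin_cos z)
    (abs_sin_le_one _) (abs_cos_le_one _)
  convert hle using 2
  · rw [deriv_snd_eq_fderiv hf, nrm_logPolar, logPolar]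
    field_simp
  · rw [nrm_logPolar]

end LogPolarTransform

section PDESolution

variable {n : ℕ} {A : Matrix (Fin n) (Fin n) ℝ} {β : Fin n → ℝ} {u : Fin n → ℝ × ℝ → ℝ}

theorem cylinderSolution_logPolarTransform (hA : ∀ i j, 0 ≤ A i j) (hu : PDESolution A β u) :
    CylinderSolution A (fun j => β j + 2) fun j => logPolarTransform (β j) (u j) := by
  obtain ⟨hcont, hsmooth, hpde, hint⟩ := hu
  refine ⟨fun j => contDiff_logPolarTransform (hsmooth j), fun j t θ => ?_, hA, fun j z => ?_,
    fun k => ?_, fun j => ?_⟩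
  · simp only [logPolarTransform, logPolar_add_two_pi]
  · rw [lap_logPolarTransform (hsmooth j),
      eq_neg_of_add_eq_zero_left (hpde j _ (logPolar_ne_zero z)), mul_neg, Finset.mul_sum]
    simp only [exp_logPolarTransform]
    congr! 2
    ring
  · simp only [exp_logPolarTransform]
    exact integrable_angularIntegral_comp_logPolar (hint k)
  · obtain ⟨C, hC⟩ := (isCompact_closedBall (0 : ℝ × ℝ) 1).exists_bound_of_continuousOn
      (hcont j).continuousOn
    refine ⟨C, fun t ht θ => ?_⟩
    rw [logPolarTransform, add_sub_cancel_right]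
    refine hC _ (mem_closedBall_zero_iff.2 ((norm_le_nrm _).trans ?_))
    rw [nrm_logPolar]
    exact exp_le_one_iff.2 ht

theorem outerSlope_logPolarTransform (hu : PDESolution A β u) (j : Fin n) :
    CylinderSolution.outerSlope A (fun j => β j + 2)
        (fun j => logPolarTransform (β j) (u j)) j
      = β j + 2 - ∑ k, A j k * energyPDE β u k := by
  simp only [CylinderSolution.outerSlope, exp_logPolarTransform,
    fun k => integral_angularIntegral_comp_logPolar (hu.2.2.2 k), energyPDE, Finset.sum_div]
  congr! 2
  field_simp

theorem asymptotic_behavior_of_solutions_general (hA : ∀ i j, 0 ≤ A i j)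
    (hu : PDESolution A β u) :
    (∀ i, 2 + β i < ∑ j, A i j * energyPDE β u j) ∧
    ∃ c : Fin n → ℝ, ∃ δ > (0 : ℝ), ∃ C : ℝ, ∀ i, ∀ x : ℝ × ℝ, 1 < nrm x →
      |u i x - (-(∑ j, A i j * energyPDE β u j) * log (nrm x) + c i)| ≤ C * nrm x ^ (-δ) ∧
      |deriv (fun s => u i (s, x.2)) x.1 - (-(∑ j, A i j * energyPDE β u j) * x.1 / nrm x ^ 2)|
        ≤ C * nrm x ^ (-δ - 1) ∧
      |deriv (fun t => u i (x.1, t)) x.2 - (-(∑ j, A i j * energyPDE β u j) * x.2 / nrm x ^ 2)|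
        ≤ C * nrm x ^ (-δ - 1) := by
  have hcyl := cylinderSolution_logPolarTransform hA hu
  have hslope := outerSlope_logPolarTransform (A := A) hu
  obtain ⟨c, δ, hδ, C, hC⟩ := hcyl.exists_forall_abs_le
  refine ⟨fun i => by linarith [hslope i, hcyl.outerSlope_neg i],
    c, δ, hδ, 2 * C, fun i x hx => ?_⟩
  have hpos : 0 < nrm x := one_pos.trans hx
  obtain ⟨θ, hθ, hxθ⟩ := exists_logPolar_eq hpos
  have hdiff : DifferentiableAt ℝ (u i) (logPolar (log (nrm x), θ)) :=
    (hu.2.1 i _ (logPolar_ne_zero _)).differentiableAt two_ne_zero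
  have hexp : exp (-δ * log (nrm x)) = nrm x ^ (-δ) := by rw [rpow_def_of_pos hpos, mul_comm]
  have hpow : 2 * (C * nrm x ^ (-δ)) / nrm x = 2 * C * nrm x ^ (-δ - 1) := by
    rw [rpow_sub_one hpos.ne', mul_assoc, mul_div_assoc, mul_div_assoc]
  obtain ⟨hval, hrad, hang⟩ := hC i _ (log_nonneg hx.le) θ hθ
  rw [hexp] at hval hrad hang
  have hfst := abs_deriv_fst_sub_le_of_logPolarTransform hdiff hrad hang
  have hsnd := abs_deriv_snd_sub_le_of_logPolarTransform hdiff hrad hang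
  rw [hslope, sub_sub_cancel_left, hxθ, hpow] at hfst hsnd
  rw [hslope, logPolarTransform, hxθ] at hval
  refine ⟨(le_of_eq ?_).trans (hval.trans ?_), hfst, hsnd⟩
  · ring_nf
  · linarith [(abs_nonneg _).trans hval]

end PDESolution

theorem asymptotic_behavior_of_solutions {n : ℕ} (hn : 0 < n)
    (A : Matrix (Fin n) (Fin n) ℝ) (β : Fin n → ℝ)
    (hA : H1 A) (hβ : ∀ i, -2 < β i)
    (u : Fin n → ℝ × ℝ → ℝ) (hu : PDESolution A β u) :
    (∀ i, 2 + β i < ∑ j, A i j * energyPDE β u j) ∧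
    ∃ c : Fin n → ℝ, ∃ δ > (0:ℝ), ∃ C : ℝ,
      ∀ i, ∀ x : ℝ × ℝ, 1 < nrm x →
        |u i x - (-(∑ j, A i j * energyPDE β u j) * Real.log (nrm x) + c i)|
            ≤ C * nrm x ^ (-δ) ∧
        |deriv (fun s => u i (s, x.2)) x.1 - (-(∑ j, A i j * energyPDE β u j) * x.1 / nrm x ^ 2)|
            ≤ C * nrm x ^ (-δ - 1) ∧
        |deriv (fun t => u i (x.1, t)) x.2 - (-(∑ j, A i j * energyPDE β u j) * x.2 / nrm x ^ 2)|
            ≤ C * nrm x ^ (-δ - 1) :=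
  asymptotic_behavior_of_solutions_general hA.2.1 hu
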